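/- arXiv:2302.10118 — 6 statements merged into one kernel-verified Lean document; each statement's English description precedes it below -/
import Mathlib

section
/- Each of the n(n−1) defining inequalities of the symplectic FFLV degree cone K_{2n} defines a facet of K_{2n}: for each chosen defining inequality among (A_i) (1 ≤ i ≤ n−1), (B_{i,j}) (1 ≤ i < j ≤ n−1), (C_{i,j}) (1 ≤ i < j ≤ n−1), (D_i) (1 ≤ i ≤ n−1), there exists a point d ∈ K_{2n} which satisfies the chosen inequality with equality and all of the other defining inequalities strictly; in particular the defining inequalities form the complete, irredundant set of facets of K_{2n}. -/
/-- Index of a positive root of `sp_{2n}`: `(i, j, false)` encodes `α_{i,j}` with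
`1 ≤ i ≤ j ≤ n`, and `(i, j, true)` encodes `α_{i,j̄}` with `1 ≤ i ≤ j ≤ n-1`. -/
def IsSpRootIdx (n : ℕ) (t : ℕ × ℕ × Bool) : Prop :=
  1 ≤ t.1 ∧ t.1 ≤ t.2.1 ∧ t.2.1 ≤ n ∧ (t.2.2 = true → t.2.1 + 1 ≤ n)

instance (n : ℕ) (t : ℕ × ℕ × Bool) : Decidable (IsSpRootIdx n t) :=
  inferInstanceAs (Decidable (1 ≤ t.1 ∧ t.1 ≤ t.2.1 ∧ t.2.1 ≤ n ∧ (t.2.2 = true → t.2.1 + 1 ≤ n)))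

/-- The set `Φ⁺` of positive roots of `sp_{2n}`. -/
def SpRoot (n : ℕ) : Type := {t : ℕ × ℕ × Bool // IsSpRootIdx n t}

/-- Normalised root index, implementing the convention `α_{i,n̄} := α_{i,n}`. -/
def rIdx (n i j : ℕ) (b : Bool) : ℕ × ℕ × Bool :=
  if b = true ∧ j = n then (i, j, false) else (i, j, b)
/-- Evaluate `d ∈ ℝ^{Φ⁺}` on a root index (value `0` outside `Φ⁺`). -/
noncomputable def dval {n : ℕ} (d : SpRoot n → ℝ) (t : ℕ × ℕ × Bool) : ℝ :=
  if h : IsSpRootIdx n t then d ⟨t, h⟩ else 0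

/-- `d_{i,j}`. -/
noncomputable def dA {n : ℕ} (d : SpRoot n → ℝ) (i j : ℕ) : ℝ := dval d (i, j, false)

/-- `d_{i,j̄}`, with the convention `d_{i,n̄} = d_{i,n}`. -/
noncomputable def dB {n : ℕ} (d : SpRoot n → ℝ) (i j : ℕ) : ℝ := dval d (rIdx n i j true)
inductive FacetKind
  | A | B | C | D
  deriving DecidableEq

/-- Labels of the `n(n-1)` defining inequalities (facets) of `K_{2n}`. -/
def Facets (n : ℕ) : Set (FacetKind × ℕ × ℕ) :=
  {f | (f.1 = FacetKind.A ∧ 1 ≤ f.2.1 ∧ f.2.1 + 1 ≤ n ∧ f.2.2 = f.2.1 + 1) ∨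
       (f.1 = FacetKind.B ∧ 1 ≤ f.2.1 ∧ f.2.1 < f.2.2 ∧ f.2.2 + 1 ≤ n) ∨
       (f.1 = FacetKind.C ∧ 1 ≤ f.2.1 ∧ f.2.1 < f.2.2 ∧ f.2.2 + 1 ≤ n) ∨
       (f.1 = FacetKind.D ∧ 1 ≤ f.2.1 ∧ f.2.1 + 1 ≤ n ∧ f.2.2 = f.2.1 + 1)}

/-- Left-hand side of the defining inequality with a given label. -/
noncomputable def facetLhs {n : ℕ} (d : SpRoot n → ℝ) : FacetKind × ℕ × ℕ → ℝ
  | (FacetKind.A, i, _) => dA d i i + dA d (i+1) (i+1)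
  | (FacetKind.B, i, j) => dA d i j + dA d (i+1) (j+1)
  | (FacetKind.C, i, j) => dB d i (j+1) + dB d (i+1) j
  | (FacetKind.D, i, _) => 2 * dB d i (i+1)

/-- Right-hand side of the defining inequality with a given label. -/
noncomputable def facetRhs {n : ℕ} (d : SpRoot n → ℝ) : FacetKind × ℕ × ℕ → ℝ
  | (FacetKind.A, i, _) => dA d i (i+1)
  | (FacetKind.B, i, j) => dA d i (j+1) + dA d (i+1) j
  | (FacetKind.C, i, j) => dB d i j + dB d (i+1) (j+1)
  | (FacetKind.D, i, _) => dB d i i + dB d (i+1) (i+1)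

/-- The symplectic FFLV degree cone `K_{2n} ⊆ ℝ^{Φ⁺}`. -/
def Kcone (n : ℕ) : Set (SpRoot n → ℝ) :=
  {d | ∀ f ∈ Facets n, facetRhs d f ≤ facetLhs d f}

/-- Points of `ℝ^{Φ⁺}` satisfying every defining inequality of `K_{2n}` strictly. -/
def KconeStrict (n : ℕ) : Set (SpRoot n → ℝ) :=
  {d | ∀ f ∈ Facets n, facetRhs d f < facetLhs d f}

/-!
The slacks (left-hand side minus right-hand side) of the defining inequalities are linearly
independent functionals on `ℝ^{Φ⁺}`: they can be prescribed arbitrarily. Prescribing slack `0` for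
the chosen inequality and `1` for all others gives the desired point.

To prescribe the slacks, regard `d` as two triangular arrays, an unbarred one `F` and a barred one
`G`, glued along column `n`. The inequalities `B` and `C` concern the mixed differences of `F` and
`G`, which can be prescribed by summing over rectangles and do not change when a function of the
row or of the column alone is added. A function of the column then corrects the `A`-slacks of `F`;
in `G`, a function of the row achieves the gluing and a function of the column, vanishing at `n`,
corrects the `D`-slacks.
-/

section MixedDifference

variable {M : Type*} [AddCommGroup M]

/-- The mixed second difference of a two-dimensional array. The inequalities `B` (for unbarred
entries) and `C` (for barred entries, up to sign) are conditions on it. -/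
def mixedDiff (F : ℕ → ℕ → M) (i j : ℕ) : M :=
  F i j + F (i + 1) (j + 1) - (F i (j + 1) + F (i + 1) j)

lemma mixedDiff_add_row_add_col (F : ℕ → ℕ → M) (r c : ℕ → M) (i j : ℕ) :
    mixedDiff (fun i j => F i j + r i + c j) i j = mixedDiff F i j := by
  simp only [mixedDiff]
  abel

lemma exists_mixedDiff_eq (s : ℕ → ℕ → M) :
    ∃ F : ℕ → ℕ → M, ∀ i j, mixedDiff F i j = s i j := by
  refine ⟨fun i j => ∑ k ∈ Finset.range i, ∑ l ∈ Finset.range j, s k l, fun i j => ?_⟩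
  simp only [mixedDiff, Finset.sum_range_succ, Finset.sum_add_distrib]
  abel

lemma exists_mixedDiff_eq_of_diagonal (a : ℕ → M) (b : ℕ → ℕ → M) :
    ∃ F : ℕ → ℕ → M, (∀ i, F i i + F (i + 1) (i + 1) - F i (i + 1) = a i) ∧
      ∀ i j, mixedDiff F i j = b i j := by
  obtain ⟨S, hS⟩ := exists_mixedDiff_eq b
  let c : ℕ → M := fun j => a j - (S j j + S (j + 1) (j + 1) - S j (j + 1))
  refine ⟨fun i j => S i j + 0 + c j, fun i => ?_, fun i j => ?_⟩
  · simp only [c]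
    abel
  · exact (mixedDiff_add_row_add_col S 0 c i j).trans (hS i j)

lemma exists_mixedDiff_eq_of_column_of_diagonal (n : ℕ) (u : ℕ → M) (c : ℕ → ℕ → M) (v : ℕ → M) :
    ∃ G : ℕ → ℕ → M, (∀ i, G i n = u i) ∧ (∀ i j, mixedDiff G i j = c i j) ∧
      ∀ i, 2 • G i (i + 1) - (G i i + G (i + 1) (i + 1)) = v i := by
  obtain ⟨S, hS⟩ := exists_mixedDiff_eq c
  let r : ℕ → M := fun i => u i - S i n
  let E : ℕ → ℕ → M := fun i j => S i j + r i
  let h : ℕ → M := fun j =>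
    ∑ l ∈ Finset.range j, (v l - (2 • E l (l + 1) - (E l l + E (l + 1) (l + 1))))
  refine ⟨fun i j => S i j + r i + (h j - h n), fun i => ?_, fun i j => ?_, fun i => ?_⟩
  · simp only [r]
    abel
  · exact (mixedDiff_add_row_add_col S r (fun j => h j - h n) i j).trans (hS i j)
  · have h_succ : h (i + 1) = h i + (v i - (2 • E i (i + 1) - (E i i + E (i + 1) (i + 1)))) :=
      Finset.sum_range_succ _ i
    simp only [h_succ, E]
    abel

end MixedDifference

section RootArrays

variable {n : ℕ} (F G : ℕ → ℕ → ℝ) {i j : ℕ}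

/-- The point of `ℝ^{Φ⁺}` with unbarred entries `F i j` and barred entries `G i j`. Column `n` is
read from `F`, so that `G` describes all the `d_{i,j̄}` only if it agrees with `F` there. -/
def SpRoot.ofArrays (t : SpRoot n) : ℝ :=
  if t.1.2.2 then G t.1.1 t.1.2.1 else F t.1.1 t.1.2.1

lemma dA_ofArrays (hi : 1 ≤ i) (hij : i ≤ j) (hj : j ≤ n) :
    dA (n := n) (SpRoot.ofArrays F G) i j = F i j := by
  have hroot : IsSpRootIdx n (i, j, false) := ⟨hi, hij, hj, by simp⟩
  simp [dA, dval, hroot, SpRoot.ofArrays]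

lemma dB_ofArrays (hFG : ∀ i, G i n = F i n) (hi : 1 ≤ i) (hij : i ≤ j) (hj : j ≤ n) :
    dB (n := n) (SpRoot.ofArrays F G) i j = G i j := by
  obtain rfl | hlt := hj.eq_or_lt
  · rw [hFG, ← dA_ofArrays F G hi hij le_rfl]
    simp [dA, dB, rIdx]
  · have hroot : IsSpRootIdx n (i, j, true) := ⟨hi, hij, hj, fun _ => hlt⟩
    simp [dB, rIdx, hlt.ne, dval, hroot, SpRoot.ofArrays]

end RootArrays

lemma exists_facetLhs_sub_facetRhs_eq (n : ℕ) (s : FacetKind × ℕ × ℕ → ℝ) :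
    ∃ d : SpRoot n → ℝ, ∀ f ∈ Facets n, facetLhs d f - facetRhs d f = s f := by
  obtain ⟨F, hA, hB⟩ := exists_mixedDiff_eq_of_diagonal
    (fun i => s (.A, i, i + 1)) (fun i j => s (.B, i, j))
  obtain ⟨G, hFG, hC, hD⟩ := exists_mixedDiff_eq_of_column_of_diagonal n
    (fun i => F i n) (fun i j => -s (.C, i, j)) (fun i => s (.D, i, i + 1))
  refine ⟨SpRoot.ofArrays F G, ?_⟩
  rintro ⟨k, i, j⟩ hf
  simp only [Facets, Set.mem_ofPred_eq] at hf
  obtain ⟨rfl, hi, hn, rfl⟩ | ⟨rfl, hi, hij, hn⟩ | ⟨rfl, hi, hij, hn⟩ | ⟨rfl, hi, hn, rfl⟩ := hf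
  · simpa (disch := omega) only [facetLhs, facetRhs, dA_ofArrays] using hA i
  · simpa (disch := omega) only [facetLhs, facetRhs, dA_ofArrays, mixedDiff] using hB i j
  · have hslack : G i (j + 1) + G (i + 1) j - (G i j + G (i + 1) (j + 1)) = s (.C, i, j) := by
      rw [← neg_sub, neg_eq_iff_eq_neg]
      exact hC i j
    simpa (disch := omega) only [facetLhs, facetRhs, dB_ofArrays F G hFG] using hslack
  · simpa (disch := omega) only [facetLhs, facetRhs, dB_ofArrays F G hFG, two_nsmul, two_mul]
      using hD i

/-- Each of the `n(n-1)` defining inequalities of `K_{2n}` defines a facet: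
for each defining inequality there is a point of `K_{2n}` satisfying it with equality and all
other defining inequalities strictly; in particular the defining inequalities form the complete
irredundant set of facets of `K_{2n}`. -/
theorem spFFLV_cone_facets (n : ℕ) (hn : 2 ≤ n) :
    ∀ f ∈ Facets n, ∃ d ∈ Kcone n,
      facetLhs d f = facetRhs d f ∧
      ∀ g ∈ Facets n, g ≠ f → facetRhs d g < facetLhs d g := by
  intro f hf
  obtain ⟨d, hd⟩ := exists_facetLhs_sub_facetRhs_eq n (Function.update 1 f 0)
  have h_eq : facetLhs d f = facetRhs d f := sub_eq_zero.mp (by simp [hd f hf])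
  have h_lt : ∀ g ∈ Facets n, g ≠ f → facetRhs d g < facetLhs d g :=
    fun g hg hne => sub_pos.mp (by simp [hd g hg, hne])
  have h_mem : d ∈ Kcone n := by
    intro g hg
    obtain rfl | hne := eq_or_ne g f
    · exact h_eq.ge
    · exact (h_lt g hg hne).le
  exact ⟨d, h_mem, h_eq, h_lt⟩
end

section
/- The lineality space of the symplectic FFLV degree cone K_{2n} equals L′: a point d ∈ ℝ^{Φ⁺} satisfies both d ∈ K_{2n} and −d ∈ K_{2n} if and only if d ∈ L′; moreover the subspace L′ has dimension n. -/
/-- The linear subspace `L′ ⊆ ℝ^{Φ⁺}` from the paper: `d_{i,j} = d_{i,i} + ⋯ + d_{j,j}` and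
`d_{i,j̄} = (d_{i,i} + ⋯ + d_{n,n}) + (d_{n-1,n-1} + ⋯ + d_{j,j})`. -/
def Lset (n : ℕ) : Set (SpRoot n → ℝ) :=
  {d | (∀ i j : ℕ, 1 ≤ i → i < j → j ≤ n →
          dA d i j = ∑ k ∈ Finset.Icc i j, dA d k k) ∧
       (∀ i j : ℕ, 1 ≤ i → i ≤ j → j + 1 ≤ n →
          dB d i j = (∑ k ∈ Finset.Icc i n, dA d k k) + ∑ k ∈ Finset.Icc j (n-1), dA d k k)}

/-!
The lineality space is cut out by turning every defining inequality of `K_{2n}` into an equality.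
Each equality of type `B` or `C` says that a mixed second difference of `d` vanishes, so a
difference of two neighbouring values can be moved along a row or a column of the array of roots
until an equality of type `A` or `D`, or the convention `d_{i,n̄} = d_{i,n}`, evaluates it as the
value of `d` at a simple root. Hence `d` is additive whenever a simple root is split off a positive
root, and such a `d` is determined by its values on the `n` simple roots, which are arbitrary.
-/

theorem eq_of_forall_eq_succ {α : Type*} {φ : ℕ → α} {a b : ℕ} (hab : a ≤ b)
    (h : ∀ k, a ≤ k → k < b → φ k = φ (k + 1)) : φ a = φ b := by
  induction b, hab using Nat.le_induction with
  | base => rfl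
  | succ b hab ih => exact (ih fun k hk hkb => h k hk (by omega)).trans (h b hab (by omega))

theorem sum_Icc_eq_add_sum_Icc_succ {M : Type*} [AddCommMonoid M] (f : ℕ → M) {i j : ℕ}
    (hij : i ≤ j) : ∑ k ∈ Finset.Icc i j, f k = f i + ∑ k ∈ Finset.Icc (i + 1) j, f k := by
  rw [← Finset.add_sum_Ioc_eq_sum_Icc hij, Finset.Icc_add_one_left_eq_Ioc]

section Values

variable {n i j : ℕ}

theorem dval_of_isSpRootIdx {t : ℕ × ℕ × Bool} (d : SpRoot n → ℝ) (h : IsSpRootIdx n t) :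
    dval d t = d ⟨t, h⟩ :=
  dif_pos h

theorem dval_neg (d : SpRoot n → ℝ) (t : ℕ × ℕ × Bool) : dval (-d) t = -dval d t := by
  unfold dval
  split
  · rfl
  · exact neg_zero.symm

theorem rIdx_true_of_lt (hj : j < n) : rIdx n i j true = (i, j, true) :=
  if_neg fun h => hj.ne h.2

theorem dB_top (d : SpRoot n → ℝ) (i : ℕ) : dB d i n = dA d i n := by
  simp only [dB, dA, rIdx, and_self, if_true]

theorem dA_self_eq_zero_of_notMem {k : ℕ} (d : SpRoot n → ℝ) (hk : k ∉ Finset.Icc 1 n) :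
    dA d k k = 0 :=
  dif_neg fun h => hk (Finset.mem_Icc.2 ⟨h.1, h.2.2.1⟩)

end Values

section Facets

variable {n : ℕ}

theorem forall_mem_Facets {P : FacetKind × ℕ × ℕ → Prop} :
    (∀ f ∈ Facets n, P f) ↔
      (∀ i, 1 ≤ i → i < n → P (.A, i, i + 1)) ∧
      (∀ i j, 1 ≤ i → i < j → j < n → P (.B, i, j)) ∧
      (∀ i j, 1 ≤ i → i < j → j < n → P (.C, i, j)) ∧
      (∀ i, 1 ≤ i → i < n → P (.D, i, i + 1)) := by
  constructor
  · intro h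
    exact ⟨fun i hi hin => h _ (.inl ⟨rfl, hi, hin, rfl⟩),
      fun i j hi hij hjn => h _ (.inr (.inl ⟨rfl, hi, hij, hjn⟩)),
      fun i j hi hij hjn => h _ (.inr (.inr (.inl ⟨rfl, hi, hij, hjn⟩))),
      fun i hi hin => h _ (.inr (.inr (.inr ⟨rfl, hi, hin, rfl⟩)))⟩
  · rintro ⟨hA, hB, hC, hD⟩ ⟨kind, i, j⟩ hf
    simp only [Facets, Set.mem_ofPred_eq] at hf
    obtain ⟨rfl, hi, hin, rfl⟩ | ⟨rfl, hi, hij, hjn⟩ | ⟨rfl, hi, hij, hjn⟩ | ⟨rfl, hi, hin, rfl⟩ :=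
      hf
    exacts [hA i hi hin, hB i j hi hij hjn, hC i j hi hij hjn, hD i hi hin]

theorem facetLhs_neg (d : SpRoot n → ℝ) (f : FacetKind × ℕ × ℕ) :
    facetLhs (-d) f = -facetLhs d f := by
  obtain ⟨_ | _ | _ | _, i, j⟩ := f <;> simp only [facetLhs, dA, dB, dval_neg] <;> ring

theorem facetRhs_neg (d : SpRoot n → ℝ) (f : FacetKind × ℕ × ℕ) :
    facetRhs (-d) f = -facetRhs d f := by
  obtain ⟨_ | _ | _ | _, i, j⟩ := f <;> simp only [facetRhs, dA, dB, dval_neg] <;> ring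

theorem mem_Kcone_and_neg_mem_iff {d : SpRoot n → ℝ} :
    (d ∈ Kcone n ∧ -d ∈ Kcone n) ↔ ∀ f ∈ Facets n, facetRhs d f = facetLhs d f := by
  simp only [Kcone, Set.mem_ofPred_eq, facetLhs_neg, facetRhs_neg, neg_le_neg_iff,
    ← forall₂_and, ← le_antisymm_iff]

end Facets

/-- `d` is additive along every way of splitting a simple root off a positive root, namely
`α_{i,j} = α_i + α_{i+1,j}`, `α_{i,j̄} = α_i + α_{i+1,j̄}` and, writing `m = j + 1`,
`α_{i,j̄} = α_{i,m̄} + α_j`. -/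
structure IsRootAdditive {n : ℕ} (d : SpRoot n → ℝ) : Prop where
  dA_left : ∀ i j, 1 ≤ i → i < j → j ≤ n → dA d i j = dA d i i + dA d (i + 1) j
  dB_left : ∀ i j, 1 ≤ i → i < j → j ≤ n → dB d i j = dA d i i + dB d (i + 1) j
  dB_right : ∀ i j, 1 ≤ i → i ≤ j → j < n → dB d i j = dB d i (j + 1) + dA d j j

section FacetEqualities

variable {n : ℕ} {d : SpRoot n → ℝ}

theorem dA_left_of_facet_eq
    (hA : ∀ i, 1 ≤ i → i < n → dA d i (i + 1) = dA d i i + dA d (i + 1) (i + 1))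
    (hB : ∀ i j, 1 ≤ i → i < j → j < n →
      dA d i (j + 1) + dA d (i + 1) j = dA d i j + dA d (i + 1) (j + 1))
    (i j : ℕ) (hi : 1 ≤ i) (hij : i < j) (hjn : j ≤ n) :
    dA d i j = dA d i i + dA d (i + 1) j := by
  have row_difference_const :
      dA d i (i + 1) - dA d (i + 1) (i + 1) = dA d i j - dA d (i + 1) j :=
    eq_of_forall_eq_succ (φ := fun k => dA d i k - dA d (i + 1) k) hij fun k hik hkj => by
      linarith [hB i k hi hik (by omega)]
  linarith [hA i hi (by omega)]

theorem dB_left_of_facet_eq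
    (dA_left : ∀ i j, 1 ≤ i → i < j → j ≤ n → dA d i j = dA d i i + dA d (i + 1) j)
    (hC : ∀ i j, 1 ≤ i → i < j → j < n →
      dB d i j + dB d (i + 1) (j + 1) = dB d i (j + 1) + dB d (i + 1) j)
    (i j : ℕ) (hi : 1 ≤ i) (hij : i < j) (hjn : j ≤ n) :
    dB d i j = dA d i i + dB d (i + 1) j := by
  have row_difference_const : dB d i j - dB d (i + 1) j = dB d i n - dB d (i + 1) n :=
    eq_of_forall_eq_succ (φ := fun k => dB d i k - dB d (i + 1) k) hjn fun k hjk hkn => by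
      linarith [hC i k hi (by omega) hkn]
  rw [dB_top, dB_top] at row_difference_const
  linarith [dA_left i n hi (by omega) le_rfl]

theorem dB_right_of_facet_eq
    (dB_left : ∀ i j, 1 ≤ i → i < j → j ≤ n → dB d i j = dA d i i + dB d (i + 1) j)
    (hD : ∀ i, 1 ≤ i → i < n → dB d i i + dB d (i + 1) (i + 1) = 2 * dB d i (i + 1))
    (i j : ℕ) (hi : 1 ≤ i) (hij : i ≤ j) (hjn : j < n) :
    dB d i j = dB d i (j + 1) + dA d j j := by
  have column_difference_const : dB d i j - dB d i (j + 1) = dB d j j - dB d j (j + 1) :=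
    eq_of_forall_eq_succ (φ := fun k => dB d k j - dB d k (j + 1)) hij fun k hik hkj => by
      linarith [dB_left k j (by omega) hkj hjn.le, dB_left k (j + 1) (by omega) (by omega) hjn]
  linarith [hD j (by omega) hjn, dB_left j (j + 1) (by omega) (by omega) hjn]

theorem facet_eq_iff_isRootAdditive :
    (∀ f ∈ Facets n, facetRhs d f = facetLhs d f) ↔ IsRootAdditive d := by
  rw [forall_mem_Facets]
  constructor
  · rintro ⟨hA, hB, hC, hD⟩
    have dA_left := dA_left_of_facet_eq hA hB
    have dB_left := dB_left_of_facet_eq dA_left hC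
    exact ⟨dA_left, dB_left, dB_right_of_facet_eq dB_left hD⟩
  · intro hd
    refine ⟨fun i hi hin => ?_, fun i j hi hij hjn => ?_, fun i j hi hij hjn => ?_,
      fun i hi hin => ?_⟩ <;> simp only [facetLhs, facetRhs]
    · exact hd.dA_left i (i + 1) hi (by omega) hin
    · linarith [hd.dA_left i j hi hij hjn.le, hd.dA_left i (j + 1) hi (by omega) hjn]
    · linarith [hd.dB_left i j hi hij hjn.le, hd.dB_left i (j + 1) hi (by omega) hjn]
    · linarith [hd.dB_right i i hi le_rfl hin, hd.dB_left i (i + 1) hi (by omega) hin]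

end FacetEqualities

section Lset

variable {n : ℕ} {d : SpRoot n → ℝ} {i j : ℕ}

theorem IsRootAdditive.dA_eq_sum (hd : IsRootAdditive d) (hi : 1 ≤ i) (hij : i ≤ j)
    (hjn : j ≤ n) : dA d i j = ∑ k ∈ Finset.Icc i j, dA d k k := by
  induction hij using Nat.decreasingInduction with
  | self => rw [Finset.Icc_self, Finset.sum_singleton]
  | of_succ i hij ih =>
    rw [hd.dA_left i j hi hij hjn, ih (by omega), sum_Icc_eq_add_sum_Icc_succ _ hij.le]

theorem IsRootAdditive.dB_eq_sum (hd : IsRootAdditive d) (hi : 1 ≤ i) (hij : i ≤ j)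
    (hjn : j ≤ n) :
    dB d i j = (∑ k ∈ Finset.Icc i n, dA d k k) + ∑ k ∈ Finset.Ico j n, dA d k k := by
  induction hjn using Nat.decreasingInduction with
  | self => rw [dB_top, hd.dA_eq_sum hi hij le_rfl, Finset.Ico_self, Finset.sum_empty, add_zero]
  | of_succ j hjn ih =>
    rw [hd.dB_right i j hi hij hjn, ih (by omega), Finset.sum_eq_sum_Ico_succ_bot hjn]
    ring

theorem dA_eq_sum_of_mem_Lset (hd : d ∈ Lset n) (hi : 1 ≤ i) (hij : i ≤ j) (hjn : j ≤ n) :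
    dA d i j = ∑ k ∈ Finset.Icc i j, dA d k k := by
  rcases hij.eq_or_lt with rfl | hij
  · rw [Finset.Icc_self, Finset.sum_singleton]
  · exact hd.1 i j hi hij hjn

theorem dB_eq_sum_of_mem_Lset (hd : d ∈ Lset n) (hi : 1 ≤ i) (hij : i ≤ j) (hjn : j ≤ n) :
    dB d i j = (∑ k ∈ Finset.Icc i n, dA d k k) + ∑ k ∈ Finset.Ico j n, dA d k k := by
  rcases hjn.eq_or_lt with rfl | hjn
  · rw [dB_top, dA_eq_sum_of_mem_Lset hd hi hij le_rfl, Finset.Ico_self, Finset.sum_empty,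
      add_zero]
  · rw [hd.2 i j hi hij hjn, Finset.Icc_sub_one_right_eq_Ico_of_not_isMin (not_isMin_of_lt hjn)]

theorem isRootAdditive_iff_mem_Lset : IsRootAdditive d ↔ d ∈ Lset n := by
  constructor
  · intro hd
    refine ⟨fun i j hi hij hjn => hd.dA_eq_sum hi hij.le hjn, fun i j hi hij hjn => ?_⟩
    rw [hd.dB_eq_sum hi hij (by omega),
      Finset.Icc_sub_one_right_eq_Ico_of_not_isMin (not_isMin_of_lt hjn)]
  · intro hd
    refine ⟨fun i j hi hij hjn => ?_, fun i j hi hij hjn => ?_, fun i j hi hij hjn => ?_⟩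
    · rw [dA_eq_sum_of_mem_Lset hd hi hij.le hjn,
        dA_eq_sum_of_mem_Lset hd (by omega) hij hjn, sum_Icc_eq_add_sum_Icc_succ _ hij.le]
    · rw [dB_eq_sum_of_mem_Lset hd hi hij.le hjn,
        dB_eq_sum_of_mem_Lset hd (by omega) hij hjn,
        sum_Icc_eq_add_sum_Icc_succ _ (hij.le.trans hjn), add_assoc]
    · rw [dB_eq_sum_of_mem_Lset hd hi hij hjn.le,
        dB_eq_sum_of_mem_Lset hd hi (by omega) hjn, Finset.sum_eq_sum_Ico_succ_bot hjn]
      ring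

end Lset

/-- The additive extension to the positive roots of the values `c k` at the simple roots `α_k`;
only `c 1, …, c n` are used. -/
def additiveExtension (n : ℕ) : (ℕ → ℝ) →ₗ[ℝ] (SpRoot n → ℝ) where
  toFun c t :=
    if t.1.2.2 then
      (∑ k ∈ Finset.Icc t.1.1 n, c k) + ∑ k ∈ Finset.Icc t.1.2.1 (n - 1), c k
    else ∑ k ∈ Finset.Icc t.1.1 t.1.2.1, c k
  map_add' c c' := by
    funext t
    simp only [Pi.add_apply, Finset.sum_add_distrib]
    split <;> ring
  map_smul' a c := by
    funext t
    simp only [Pi.smul_apply, RingHom.id_apply, smul_eq_mul, ← Finset.mul_sum]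
    split <;> ring

/-- The additive extension of a function on the simple roots, the simple root `α_k` being encoded
by its index `k ∈ {1, …, n}`. -/
noncomputable def simpleRootExtension (n : ℕ) :
    (Finset.Icc 1 n → ℝ) →ₗ[ℝ] (SpRoot n → ℝ) :=
  additiveExtension n ∘ₗ Function.ExtendByZero.linearMap ℝ Subtype.val

section Extension

variable {n : ℕ} {c : ℕ → ℝ} {d : SpRoot n → ℝ} {i j : ℕ}

theorem dA_additiveExtension (hi : 1 ≤ i) (hij : i ≤ j) (hjn : j ≤ n) :
    dA (additiveExtension n c) i j = ∑ k ∈ Finset.Icc i j, c k :=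
  dval_of_isSpRootIdx _ ⟨hi, hij, hjn, by simp⟩

theorem dB_additiveExtension (hi : 1 ≤ i) (hij : i ≤ j) (hjn : j < n) :
    dB (additiveExtension n c) i j =
      (∑ k ∈ Finset.Icc i n, c k) + ∑ k ∈ Finset.Icc j (n - 1), c k := by
  rw [dB, rIdx_true_of_lt hjn]
  exact dval_of_isSpRootIdx _ ⟨hi, hij, hjn.le, fun _ => hjn⟩

theorem dA_self_additiveExtension {k : ℕ} (hk : 1 ≤ k) (hkn : k ≤ n) :
    dA (additiveExtension n c) k k = c k := by
  rw [dA_additiveExtension hk le_rfl hkn, Finset.Icc_self, Finset.sum_singleton]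

theorem additiveExtension_mem_Lset : additiveExtension n c ∈ Lset n := by
  have sum_simple_values {i j : ℕ} (hi : 1 ≤ i) (hjn : j ≤ n) :
      ∑ k ∈ Finset.Icc i j, dA (additiveExtension n c) k k = ∑ k ∈ Finset.Icc i j, c k :=
    Finset.sum_congr rfl fun k hk =>
      dA_self_additiveExtension (hi.trans (Finset.mem_Icc.1 hk).1)
        ((Finset.mem_Icc.1 hk).2.trans hjn)
  refine ⟨fun i j hi hij hjn => ?_, fun i j hi hij hjn => ?_⟩
  · rw [dA_additiveExtension hi hij.le hjn, sum_simple_values hi hjn]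
  · rw [dB_additiveExtension hi hij hjn, sum_simple_values hi le_rfl,
      sum_simple_values (hi.trans hij) (Nat.sub_le n 1)]

theorem additiveExtension_dA_self (hd : d ∈ Lset n) :
    additiveExtension n (fun k => dA d k k) = d := by
  funext ⟨⟨i, j, b⟩, h⟩
  obtain ⟨hi, hij, hjn, hjn'⟩ := id h
  cases b with
  | false =>
    calc
      additiveExtension n (fun k => dA d k k) ⟨(i, j, false), h⟩ =
          dA d i j := (dA_eq_sum_of_mem_Lset hd hi hij hjn).symm
      _ = d ⟨(i, j, false), h⟩ := dval_of_isSpRootIdx d h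
  | true =>
    calc
      additiveExtension n (fun k => dA d k k) ⟨(i, j, true), h⟩ =
          dB d i j := (hd.2 i j hi hij (hjn' rfl)).symm
      _ = dval d (i, j, true) := by rw [dB, rIdx_true_of_lt (hjn' rfl)]
      _ = d ⟨(i, j, true), h⟩ := dval_of_isSpRootIdx d h

theorem extend_dA_self :
    Function.extend (Subtype.val : Finset.Icc 1 n → ℕ) (fun k => dA d k k) 0 =
      fun k => dA d k k := by
  funext k
  by_cases hk : k ∈ Finset.Icc 1 n
  · exact Subtype.val_injective.extend_apply _ _ (⟨k, hk⟩ : Finset.Icc 1 n)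
  · rw [Function.extend_apply' _ _ _ (by rintro ⟨k, rfl⟩; exact hk k.2),
      dA_self_eq_zero_of_notMem d hk, Pi.zero_apply]

theorem simpleRootExtension_injective : Function.Injective (simpleRootExtension n) := by
  have recover_values (c : Finset.Icc 1 n → ℝ) (k : Finset.Icc 1 n) :
      dA (simpleRootExtension n c) k k = c k :=
    (dA_self_additiveExtension (Finset.mem_Icc.1 k.2).1 (Finset.mem_Icc.1 k.2).2).trans
      (Subtype.val_injective.extend_apply c 0 k)
  intro c c' h
  funext k
  rw [← recover_values c k, h, recover_values c' k]

theorem coe_range_simpleRootExtension :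
    (LinearMap.range (simpleRootExtension n) : Set (SpRoot n → ℝ)) = Lset n := by
  refine Set.Subset.antisymm ?_ fun d hd => ⟨fun k => dA d k k, ?_⟩
  · rintro _ ⟨c, rfl⟩
    exact additiveExtension_mem_Lset
  · exact (congrArg (additiveExtension n) extend_dA_self).trans (additiveExtension_dA_self hd)

theorem rank_span_Lset : Module.rank ℝ (Submodule.span ℝ (Lset n)) = n := by
  rw [← coe_range_simpleRootExtension, Submodule.span_eq,
    rank_range_of_injective _ simpleRootExtension_injective, rank_fun', Fintype.card_coe,
    Nat.card_Icc, Nat.add_sub_cancel]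

end Extension

/-- The lineality space of `K_{2n}` equals `L′`: a point `d ∈ ℝ^{Φ⁺}` satisfies
`d ∈ K_{2n}` and `-d ∈ K_{2n}` if and only if `d ∈ L′`; moreover `L′` has dimension `n`. -/
theorem spFFLV_cone_lineality (n : ℕ) (hn : 2 ≤ n) :
    (∀ d : SpRoot n → ℝ, (d ∈ Kcone n ∧ -d ∈ Kcone n) ↔ d ∈ Lset n) ∧
    Module.rank ℝ (Submodule.span ℝ (Lset n)) = n := by
  refine ⟨fun d => ?_, rank_span_Lset⟩
  rw [mem_Kcone_and_neg_mem_iff, facet_eq_iff_isRootAdditive, isRootAdditive_iff_mem_Lset]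
end

section
/- The symplectic FFLV degree cone K_{2n} is a simplicial cone: there exist N = n(n−1) vectors v_1, …, v_N ∈ ℝ^{Φ⁺} whose images in the quotient space ℝ^{Φ⁺}/L′ are linearly independent and such that K_{2n} = L′ + { c_1 v_1 + … + c_N v_N : c_1, …, c_N ≥ 0 }, where L′ is the lineality space of K_{2n}. -/
/-!
Row `i` of `d` is the sequence `d_{i,i}, d_{i,i+1}, …, d_{i,n}, d_{i,(n-1)̄}, …, d_{i,ī}`. For each
position `j` strictly between its two ends let `r_{i,j} = d_{i,i} + d_{i+1,j} - d_{i,j}`, and at the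
right end let `r_{i,ī} = d_{i,i} + (d_{i+1,(i+1)̄} - d_{i,ī}) / 2`. The defining inequalities say
exactly that `0 ≤ r_{i,i+1} ≤ … ≤ r_{i,n} ≤ r_{i,(n-1)̄} ≤ … ≤ r_{i,ī}` for every `i < n`. Hence all
of them are equalities if and only if `r` vanishes, and unwinding the recursion `r = 0` gives the
sums that define `L′`. So `L′` is the common kernel of the facet functionals, and a point of `L′` is
determined by its diagonal. The `n(n-1)` facet functionals and the `n` diagonal coordinates
therefore separate points; being `n² = |Φ⁺|` in number, they form a basis of the dual space. A cone
cut out by linearly independent functionals is simplicial, with rays spanned by a dual family.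
-/

namespace SpFFLV

open Finset

section SimplicialCone

variable {R M ι : Type*} [Ring R] [AddCommGroup M] [Module R M] {F : M →ₗ[R] ι → R}
  {v : ι → M}

theorem linearIndependent_mk_ker_of_map_eq_single [DecidableEq ι]
    (hv : ∀ i, F (v i) = Pi.single i 1) :
    LinearIndependent R fun i ↦ Submodule.Quotient.mk (p := LinearMap.ker F) (v i) := by
  refine .of_comp ((LinearMap.ker F).liftQ F le_rfl) ?_
  change LinearIndependent R fun i ↦ F (v i)
  simpa only [hv] using Pi.linearIndependent_single_one ι R

variable [Fintype ι]

theorem map_sum_smul_of_map_eq_single [DecidableEq ι] (hv : ∀ i, F (v i) = Pi.single i 1)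
    (c : ι → R) : F (∑ i, c i • v i) = c := by
  simp only [map_sum, map_smul, hv]
  exact (pi_eq_sum_univ' c).symm

theorem nonneg_map_iff_of_map_eq_single [DecidableEq ι] [LE R]
    (hv : ∀ i, F (v i) = Pi.single i 1) {x : M} :
    0 ≤ F x ↔ ∃ l ∈ LinearMap.ker F, ∃ c : ι → R, (∀ i, 0 ≤ c i) ∧ x = l + ∑ i, c i • v i := by
  constructor
  · intro hx
    refine ⟨x - ∑ i, F x i • v i, ?_, F x, hx, (sub_add_cancel _ _).symm⟩
    rw [LinearMap.mem_ker, map_sub, map_sum_smul_of_map_eq_single hv, sub_self]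
  · rintro ⟨l, hl, c, hc, rfl⟩
    rwa [map_add, LinearMap.mem_ker.1 hl, zero_add, map_sum_smul_of_map_eq_single hv]

theorem exists_linearIndependent_and_setOf_nonneg_map_eq [LE R] (hF : Function.Surjective F) :
    ∃ v : ι → M,
      LinearIndependent R (fun i ↦ Submodule.Quotient.mk (p := LinearMap.ker F) (v i)) ∧
      {x | 0 ≤ F x} = {x | ∃ l ∈ LinearMap.ker F, ∃ c : ι → R,
        (∀ i, 0 ≤ c i) ∧ x = l + ∑ i, c i • v i} := by
  classical
  choose v hv using fun i ↦ hF (Pi.single i 1)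
  exact ⟨v, linearIndependent_mk_ker_of_map_eq_single hv,
    Set.ext fun _ ↦ nonneg_map_iff_of_map_eq_single hv⟩

end SimplicialCone

theorem eq_sum_Ico_add_of_forall_eq_add {M : Type*} [AddCommMonoid M] {a f : ℕ → M} {i j : ℕ}
    (hij : i ≤ j) (h : ∀ k, i ≤ k → k < j → f k = a k + f (k + 1)) :
    f i = ∑ k ∈ Ico i j, a k + f j := by
  induction j, hij using Nat.le_induction with
  | base => simp
  | succ j hij ih =>
    rw [ih fun k hik hkj ↦ h k hik (by omega), h j hij (by omega), sum_Ico_succ_top hij, add_assoc]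

/-- A bijection witnessing `|Φ⁺| = n²`: the roots `α_{i,j}` fill the lower triangle of a square,
with the simple roots on the diagonal, and the roots `α_{i,j̄}` the strict upper triangle. -/
def rootEquiv (n : ℕ) : SpRoot n ≃ Fin n × Fin n where
  toFun
    | ⟨(i, j, false), h⟩ => (⟨j - 1, by grind [IsSpRootIdx]⟩, ⟨i - 1, by grind [IsSpRootIdx]⟩)
    | ⟨(i, j, true), h⟩ => (⟨i - 1, by grind [IsSpRootIdx]⟩, ⟨j, by grind [IsSpRootIdx]⟩)
  invFun p :=
    if h : p.2 ≤ p.1 then ⟨(p.2 + 1, p.1 + 1, false), by grind [IsSpRootIdx]⟩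
    else ⟨(p.1 + 1, p.2, true), by grind [IsSpRootIdx]⟩
  left_inv := by
    rintro ⟨⟨i, j, _ | _⟩, h⟩ <;> grind [IsSpRootIdx]
  right_inv := by
    rintro ⟨a, b⟩
    by_cases h : b ≤ a <;> simp [h]

/-- A bijection witnessing that there are `n(n-1)` facets: those of type `A` and `B` fill the
strict lower triangle of an `n × (n-1)` rectangle, those of type `D` its diagonal, and those of
type `C` the strict upper triangle. -/
def facetEquiv (n : ℕ) : Facets n ≃ Fin n × Fin (n - 1) where
  toFun
    | ⟨(.A, i, j), h⟩ => (⟨i, by grind [Facets]⟩, ⟨i - 1, by grind [Facets]⟩)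
    | ⟨(.B, i, j), h⟩ => (⟨j, by grind [Facets]⟩, ⟨i - 1, by grind [Facets]⟩)
    | ⟨(.C, i, j), h⟩ => (⟨i - 1, by grind [Facets]⟩, ⟨j - 1, by grind [Facets]⟩)
    | ⟨(.D, i, j), h⟩ => (⟨i - 1, by grind [Facets]⟩, ⟨i - 1, by grind [Facets]⟩)
  invFun p :=
    if hA : p.1.1 = p.2 + 1 then ⟨(.A, p.1, p.1 + 1), by grind [Facets]⟩
    else if hB : p.2 + 1 < p.1.1 then ⟨(.B, p.2 + 1, p.1), by grind [Facets]⟩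
    else if hC : p.1.1 < p.2 then ⟨(.C, p.1 + 1, p.2 + 1), by grind [Facets]⟩
    else ⟨(.D, p.1 + 1, p.1 + 2), by grind [Facets]⟩
  left_inv := by
    rintro ⟨⟨_ | _ | _ | _, i, j⟩, h⟩ <;> grind [Facets]
  right_inv := by
    rintro ⟨a, b⟩
    grind

instance (n : ℕ) : Fintype (SpRoot n) := .ofEquiv _ (rootEquiv n).symm

instance (n : ℕ) : Fintype (Facets n) := .ofEquiv _ (facetEquiv n).symm

theorem card_spRoot (n : ℕ) : Fintype.card (SpRoot n) = n * n := by
  simp [Fintype.card_congr (rootEquiv n)]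

theorem card_facets (n : ℕ) : Fintype.card (Facets n) = n * (n - 1) := by
  simp [Fintype.card_congr (facetEquiv n)]

variable {n : ℕ}

theorem dval_add (d d' : SpRoot n → ℝ) (t : ℕ × ℕ × Bool) :
    dval (d + d') t = dval d t + dval d' t := by
  unfold dval; split_ifs
  · rfl
  · exact (add_zero 0).symm

theorem dval_smul (c : ℝ) (d : SpRoot n → ℝ) (t : ℕ × ℕ × Bool) :
    dval (c • d) t = c * dval d t := by
  unfold dval; split_ifs
  · rfl
  · exact (mul_zero c).symm

theorem dB_last (d : SpRoot n → ℝ) (i : ℕ) : dB d i n = dA d i n := by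
  simp [dB, dA, rIdx]

theorem eq_zero_of_dA_eq_zero_of_dB_eq_zero {d : SpRoot n → ℝ}
    (hA : ∀ i j, 1 ≤ i → i ≤ j → j ≤ n → dA d i j = 0)
    (hB : ∀ i j, 1 ≤ i → i ≤ j → j + 1 ≤ n → dB d i j = 0) : d = 0 := by
  funext ⟨⟨i, j, b⟩, h⟩
  obtain ⟨hi, hij, hj, hb⟩ := id h
  change d ⟨(i, j, b), h⟩ = 0
  cases b with
  | false => simpa [dA, dval, h] using hA i j hi hij hj
  | true =>
    have hjn : j ≠ n := (Nat.lt_of_succ_le (hb rfl)).ne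
    simpa [dB, rIdx, hjn, dval, h] using hB i j hi hij (hb rfl)

/-- The facet functionals of `K_{2n}`: the left-hand sides minus the right-hand sides of the
defining inequalities. -/
noncomputable def slack (n : ℕ) : (SpRoot n → ℝ) →ₗ[ℝ] Facets n → ℝ where
  toFun d f := facetLhs d f - facetRhs d f
  map_add' d d' := by
    ext ⟨⟨_ | _ | _ | _, i, j⟩, _⟩ <;>
      simp only [facetLhs, facetRhs, dA, dB, dval_add, Pi.add_apply] <;> ring
  map_smul' c d := by
    ext ⟨⟨_ | _ | _ | _, i, j⟩, _⟩ <;>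
      simp only [facetLhs, facetRhs, dA, dB, dval_smul, Pi.smul_apply, smul_eq_mul,
        RingHom.id_apply] <;> ring

/-- The coordinates of `d ∈ ℝ^{Φ⁺}` at the simple roots. -/
noncomputable def diagonal (n : ℕ) : (SpRoot n → ℝ) →ₗ[ℝ] Icc 1 n → ℝ where
  toFun d k := dA d k k
  map_add' d d' := by ext k; exact dval_add d d' _
  map_smul' c d := by ext k; exact dval_smul c d _

theorem mem_Kcone_iff {d : SpRoot n → ℝ} : d ∈ Kcone n ↔ 0 ≤ slack n d :=
  ⟨fun h f ↦ sub_nonneg.2 (h f f.2), fun h f hf ↦ sub_nonneg.1 (h ⟨f, hf⟩)⟩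

theorem slack_eq_zero_iff {d : SpRoot n → ℝ} :
    slack n d = 0 ↔ ∀ f ∈ Facets n, facetLhs d f = facetRhs d f :=
  ⟨fun h f hf ↦ sub_eq_zero.1 (congrFun h ⟨f, hf⟩), fun h ↦ funext fun f ↦ sub_eq_zero.2 (h f f.2)⟩

/-- The recursion expressing each row of `d` through its diagonal entry and the next row. It
describes `L′` locally: unwinding it yields the sums in `Lset`. -/
structure IsRowRecursive (d : SpRoot n → ℝ) : Prop where
  dA_eq : ∀ i j, 1 ≤ i → i < j → j ≤ n → dA d i j = dA d i i + dA d (i + 1) j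
  dB_eq : ∀ i j, 1 ≤ i → i < j → j ≤ n → dB d i j = dA d i i + dB d (i + 1) j
  dB_self_eq : ∀ i, 1 ≤ i → i < n → dB d i i = 2 * dA d i i + dB d (i + 1) (i + 1)

namespace IsRowRecursive

variable {d : SpRoot n → ℝ}

theorem facetLhs_eq_facetRhs (hd : IsRowRecursive d) {f : FacetKind × ℕ × ℕ} (hf : f ∈ Facets n) :
    facetLhs d f = facetRhs d f := by
  obtain ⟨k, i, j⟩ := f
  simp only [Facets, Set.mem_ofPred_eq] at hf
  rcases hf with ⟨rfl, hi, hj, rfl⟩ | ⟨rfl, hi, hij, hj⟩ | ⟨rfl, hi, hij, hj⟩ |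
    ⟨rfl, hi, hj, rfl⟩ <;> dsimp only [facetLhs, facetRhs]
  · exact (hd.dA_eq i (i + 1) hi i.lt_succ_self hj).symm
  · linarith [hd.dA_eq i j hi hij (by omega), hd.dA_eq i (j + 1) hi (by omega) hj]
  · linarith [hd.dB_eq i j hi hij (by omega), hd.dB_eq i (j + 1) hi (by omega) hj]
  · linarith [hd.dB_eq i (i + 1) hi i.lt_succ_self hj, hd.dB_self_eq i hi hj]

theorem of_facetLhs_eq_facetRhs (h : ∀ f ∈ Facets n, facetLhs d f = facetRhs d f) :
    IsRowRecursive d := by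
  have eqA (i : ℕ) (hi : 1 ≤ i) (hin : i < n) : dA d i i + dA d (i + 1) (i + 1) = dA d i (i + 1) :=
    h (.A, i, i + 1) (by grind [Facets])
  have eqB (i j : ℕ) (hi : 1 ≤ i) (hij : i < j) (hj : j < n) :
      dA d i j + dA d (i + 1) (j + 1) = dA d i (j + 1) + dA d (i + 1) j :=
    h (.B, i, j) (by grind [Facets])
  have eqC (i j : ℕ) (hi : 1 ≤ i) (hij : i < j) (hj : j < n) :
      dB d i (j + 1) + dB d (i + 1) j = dB d i j + dB d (i + 1) (j + 1) :=
    h (.C, i, j) (by grind [Facets])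
  have eqD (i : ℕ) (hi : 1 ≤ i) (hin : i < n) :
      2 * dB d i (i + 1) = dB d i i + dB d (i + 1) (i + 1) :=
    h (.D, i, i + 1) (by grind [Facets])
  have recA (i j : ℕ) (hi : 1 ≤ i) (hij : i < j) (hj : j ≤ n) :
      dA d i j = dA d i i + dA d (i + 1) j := by
    induction j, hij using Nat.le_induction with
    | base => exact (eqA i hi hj).symm
    | succ j hij ih => linarith [eqB i j hi hij hj, ih (by omega)]
  have recB (i j : ℕ) (hi : 1 ≤ i) (hij : i < j) (hj : j ≤ n) :
      dB d i j = dA d i i + dB d (i + 1) j := by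
    induction hj using Nat.decreasingInduction with
    | self => simpa only [dB_last] using recA i n hi hij le_rfl
    | of_succ j hj ih => linarith [eqC i j hi hij hj, ih (by omega)]
  refine ⟨recA, recB, fun i hi hin ↦ ?_⟩
  linarith [eqD i hi hin, recB i (i + 1) hi i.lt_succ_self hin]

theorem of_mem_Lset (hd : d ∈ Lset n) : IsRowRecursive d := by
  have sumA (i j : ℕ) (hi : 1 ≤ i) (hij : i ≤ j) (hj : j ≤ n) :
      dA d i j = ∑ k ∈ Icc i j, dA d k k := by
    rcases hij.eq_or_lt with rfl | hij
    · simp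
    · exact hd.1 i j hi hij hj
  have sumB (i j : ℕ) (hi : 1 ≤ i) (hij : i ≤ j) (hj : j ≤ n) :
      dB d i j = ∑ k ∈ Icc i n, dA d k k + ∑ k ∈ Icc j (n - 1), dA d k k := by
    rcases hj.eq_or_lt with rfl | hj
    · rw [dB_last, sumA i j hi hij le_rfl, Icc_eq_empty (a := j) (by omega)]
      simp
    · exact hd.2 i j hi hij hj
  have sum_head (i j : ℕ) (hij : i ≤ j) :
      ∑ k ∈ Icc i j, dA d k k = dA d i i + ∑ k ∈ Icc (i + 1) j, dA d k k := by
    rw [Icc_add_one_left_eq_Ioc, add_sum_Ioc_eq_sum_Icc hij (f := fun k ↦ dA d k k)]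
  constructor
  · intro i j hi hij hj
    rw [sumA i j hi hij.le hj, sumA (i + 1) j (by omega) hij hj, sum_head i j hij.le]
  · intro i j hi hij hj
    rw [sumB i j hi hij.le hj, sumB (i + 1) j (by omega) hij hj, sum_head i n (by omega), add_assoc]
  · intro i hi hin
    rw [sumB i i hi le_rfl hin.le, sumB (i + 1) (i + 1) (by omega) le_rfl hin,
      sum_head i n hin.le, sum_head i (n - 1) (by omega)]
    ring

theorem mem_Lset (hd : IsRowRecursive d) : d ∈ Lset n := by
  constructor
  · intro i j hi hij hj
    rw [← sum_Ico_add_eq_sum_Icc hij.le]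
    exact eq_sum_Ico_add_of_forall_eq_add (f := (dA d · j)) hij.le
      fun k hik hkj ↦ hd.dA_eq k j (by omega) hkj hj
  · intro i j hi hij hj
    have to_diagonal : dB d i j = ∑ k ∈ Ico i j, dA d k k + dB d j j :=
      eq_sum_Ico_add_of_forall_eq_add (f := (dB d · j)) hij
        fun k hik hkj ↦ hd.dB_eq k j (by omega) hkj (by omega)
    have along_diagonal : dB d j j = 2 * ∑ k ∈ Ico j n, dA d k k + dA d n n := by
      rw [mul_sum, ← dB_last]
      exact eq_sum_Ico_add_of_forall_eq_add (f := fun k ↦ dB d k k) (by omega)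
        fun k hjk hkn ↦ hd.dB_self_eq k (by omega) hkn
    have Icc_eq_Ico : Icc j (n - 1) = Ico j n := by grind
    rw [to_diagonal, along_diagonal, Icc_eq_Ico, ← sum_Ico_add_eq_sum_Icc (by omega : i ≤ n),
      ← sum_Ico_consecutive _ hij (by omega : j ≤ n)]
    ring

end IsRowRecursive

theorem coe_ker_slack (n : ℕ) : (LinearMap.ker (slack n) : Set (SpRoot n → ℝ)) = Lset n := by
  ext d
  rw [SetLike.mem_coe, LinearMap.mem_ker, slack_eq_zero_iff]
  exact ⟨fun h ↦ (IsRowRecursive.of_facetLhs_eq_facetRhs h).mem_Lset,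
    fun h _ ↦ (IsRowRecursive.of_mem_Lset h).facetLhs_eq_facetRhs⟩

theorem eq_zero_of_mem_Lset_of_diagonal_eq_zero {d : SpRoot n → ℝ} (hd : d ∈ Lset n)
    (h : diagonal n d = 0) : d = 0 := by
  have sum_eq_zero (i j : ℕ) (hi : 1 ≤ i) (hj : j ≤ n) : ∑ k ∈ Icc i j, dA d k k = 0 :=
    Finset.sum_eq_zero fun k hk ↦ congrFun h ⟨k, Icc_subset_Icc hi hj hk⟩
  refine eq_zero_of_dA_eq_zero_of_dB_eq_zero (fun i j hi hij hj ↦ ?_) (fun i j hi hij hj ↦ ?_)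
  · rcases hij.eq_or_lt with rfl | hij
    · simpa using sum_eq_zero i i hi hj
    · rw [hd.1 i j hi hij hj, sum_eq_zero i j hi hj]
  · rw [hd.2 i j hi hij hj, sum_eq_zero i n hi le_rfl, sum_eq_zero j (n - 1) (by omega) (by omega),
      add_zero]

theorem slack_prod_diagonal_injective (n : ℕ) :
    Function.Injective ((slack n).prod (diagonal n)) := by
  refine (injective_iff_map_eq_zero _).2 fun d hd ↦
    eq_zero_of_mem_Lset_of_diagonal_eq_zero ?_ (congrArg Prod.snd hd)
  rw [← coe_ker_slack]
  exact congrArg Prod.fst hd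

theorem slack_surjective (n : ℕ) : Function.Surjective (slack n) := by
  have finrank_eq : Module.finrank ℝ (SpRoot n → ℝ) =
      Module.finrank ℝ ((Facets n → ℝ) × (Icc 1 n → ℝ)) := by
    simp only [Module.finrank_prod, Module.finrank_fintype_fun_eq_card, card_spRoot, card_facets,
      Fintype.card_coe, Nat.card_Icc, Nat.add_sub_cancel]
    cases n <;> grind
  exact Prod.fst_surjective.comp <|
    (LinearMap.injective_iff_surjective_of_finrank_eq_finrank finrank_eq).1
      (slack_prod_diagonal_injective n)

end SpFFLV

/-- The cone `K_{2n}` is simplicial: there are `N = n(n-1)` vectors whose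
images in `ℝ^{Φ⁺}/L′` are linearly independent with
`K_{2n} = L′ + {c₁v₁ + ⋯ + c_Nv_N : cᵢ ≥ 0}`, where `L′` is the lineality space. -/
theorem spFFLV_cone_simplicial (n : ℕ) (hn : 2 ≤ n) :
    ∃ v : Fin (n * (n-1)) → (SpRoot n → ℝ),
      LinearIndependent ℝ
        (fun i => Submodule.Quotient.mk (p := Submodule.span ℝ (Lset n)) (v i)) ∧
      Kcone n = {x | ∃ l ∈ Lset n, ∃ c : Fin (n * (n-1)) → ℝ,
        (∀ i, 0 ≤ c i) ∧ x = l + ∑ i, c i • v i} := by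
  let e : Fin (n * (n - 1)) ≃ Facets n := (Fintype.equivFinOfCardEq (SpFFLV.card_facets n)).symm
  let F := LinearMap.funLeft ℝ ℝ e ∘ₗ SpFFLV.slack n
  have hF : Function.Surjective F :=
    (LinearMap.funLeft_surjective_of_injective ℝ ℝ e e.injective).comp (SpFFLV.slack_surjective n)
  have hL : Lset n = LinearMap.ker F := by
    rw [← SpFFLV.coe_ker_slack, LinearMap.ker_comp_of_ker_eq_bot _ (LinearMap.ker_eq_bot.2 <|
      LinearMap.funLeft_injective_of_surjective ℝ ℝ e e.surjective)]
  have hK : Kcone n = {x | 0 ≤ F x} :=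
    Set.ext fun x ↦ SpFFLV.mem_Kcone_iff.trans e.forall_congr_right.symm
  rw [hK, hL, Submodule.span_eq]
  exact SpFFLV.exists_linearIndependent_and_setOf_nonneg_map_eq hF
end

section
/- Every d ∈ K_{2n} satisfies the inequalities (A_{i,j,k}): d_{i,j} + d_{j+1,k} ≥ d_{i,k} for all 1 ≤ i ≤ j < k ≤ n, and (B_{i,j,k,l}): d_{i,j} + d_{k,l} ≥ d_{i,l} + d_{k,j} for all 1 ≤ i < k ≤ j < l ≤ n. -/
section InverseMonge

variable {ι κ M : Type*}

/-- The array `f` is inverse Monge (supermodular) on the rectangle `s ×ˢ t`: in every `2 × 2`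
submatrix the diagonal sum is at least the antidiagonal sum. This is the shape of `(B_{i,j,k,l})`.
Rows and columns may coincide, where the inequality is trivial, so that the degenerate cases
`i = j` and `k = j + 1` of `(A_{i,j,k})` need no separate treatment. -/
def InverseMongeOn [LE ι] [LE κ] [LE M] [Add M] (f : ι → κ → M) (s : Set ι) (t : Set κ) : Prop :=
  ∀ ⦃i⦄, i ∈ s → ∀ ⦃k⦄, k ∈ s → i ≤ k → ∀ ⦃j⦄, j ∈ t → ∀ ⦃l⦄, l ∈ t → j ≤ l →
    f i l + f k j ≤ f i j + f k l

theorem InverseMongeOn.mono [LE ι] [LE κ] [LE M] [Add M] {f : ι → κ → M} {s s' : Set ι}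
    {t t' : Set κ} (hf : InverseMongeOn f s t) (hs : s' ⊆ s) (ht : t' ⊆ t) :
    InverseMongeOn f s' t' :=
  fun _ hi _ hk hik _ hj _ hl hjl ↦ hf (hs hi) (hs hk) hik (ht hj) (ht hl) hjl

theorem inverseMongeOn_of_succ [AddCommGroup M] [PartialOrder M] [IsOrderedAddMonoid M]
    [PartialOrder ι] [SuccOrder ι] [IsSuccArchimedean ι] [PartialOrder κ] [SuccOrder κ]
    [IsSuccArchimedean κ] {f : ι → κ → M} {s : Set ι} {t : Set κ}
    (hs : s.OrdConnected) (ht : t.OrdConnected)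
    (hf : ∀ i, ¬IsMax i → i ∈ s → Order.succ i ∈ s → ∀ j, ¬IsMax j → j ∈ t → Order.succ j ∈ t →
      f i (Order.succ j) + f (Order.succ i) j ≤ f i j + f (Order.succ i) (Order.succ j)) :
    InverseMongeOn f s t := by
  have row_mono (j) (hjmax : ¬IsMax j) (hj : j ∈ t) (hj' : Order.succ j ∈ t) :
      MonotoneOn (fun i ↦ f i (Order.succ j) - f i j) s :=
    monotoneOn_of_le_succ hs fun i himax hi hi' ↦
      sub_le_sub_iff.2 ((hf i himax hi hi' j hjmax hj hj').trans_eq (add_comm _ _))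
  intro i hi k hk hik
  have col_anti : AntitoneOn (fun j ↦ f i j - f k j) t :=
    antitoneOn_of_succ_le ht fun j hjmax hj hj' ↦
      sub_le_sub_iff.2 ((sub_le_sub_iff.1 (row_mono j hjmax hj hj' hi hk hik)).trans_eq
        (add_comm _ _))
  exact fun j hj l hl hjl ↦ sub_le_sub_iff.1 (col_anti hj hl hjl)

theorem InverseMongeOn.le_add [AddCommMonoid M] [PartialOrder M] [IsOrderedCancelAddMonoid M]
    [Preorder ι] {f : ι → ι → M} {i j j' k : ι}
    (hj : InverseMongeOn f (Set.Icc i j) (Set.Icc j k))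
    (hj' : InverseMongeOn f (Set.Icc i j') (Set.Icc j' k))
    (hij : i ≤ j) (hjj' : j ≤ j') (hj'k : j' ≤ k) (hf : f j j' ≤ f j j + f j' j') :
    f i k ≤ f i j + f j' k := by
  have hij' : i ≤ j' := hij.trans hjj'
  have left : f i j' + f j j ≤ f i j + f j j' :=
    hj ⟨le_rfl, hij⟩ ⟨hij, le_rfl⟩ hij ⟨le_rfl, hjj'.trans hj'k⟩ ⟨hjj', hj'k⟩ hjj'
  have right : f i k + f j' j' ≤ f i j' + f j' k :=
    hj' ⟨le_rfl, hij'⟩ ⟨hij', le_rfl⟩ hij' ⟨le_rfl, hj'k⟩ ⟨hj'k, le_rfl⟩ hj'k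
  have adjacent : f i j' ≤ f i j + f j' j' := by
    refine le_of_add_le_add_right (a := f j j) ?_
    calc f i j' + f j j ≤ f i j + f j j' := left
      _ ≤ f i j + (f j j + f j' j') := by gcongr
      _ = f i j + f j' j' + f j j := by abel
  refine le_of_add_le_add_right (a := f j' j') ?_
  calc f i k + f j' j' ≤ f i j' + f j' k := right
    _ ≤ f i j + f j' j' + f j' k := by gcongr
    _ = f i j + f j' k + f j' j' := by abel

end InverseMonge

section Kcone

variable {n : ℕ} {d : SpRoot n → ℝ}

theorem dA_add_one_le_of_mem_Kcone (hd : d ∈ Kcone n) {i : ℕ} (hi : 1 ≤ i) (hin : i + 1 ≤ n) :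
    dA d i (i + 1) ≤ dA d i i + dA d (i + 1) (i + 1) :=
  hd (.A, i, i + 1) (.inl ⟨rfl, hi, hin, rfl⟩)

theorem dA_add_dA_le_of_mem_Kcone (hd : d ∈ Kcone n) {i j : ℕ} (hi : 1 ≤ i) (hij : i < j)
    (hjn : j + 1 ≤ n) :
    dA d i (j + 1) + dA d (i + 1) j ≤ dA d i j + dA d (i + 1) (j + 1) :=
  hd (.B, i, j) (.inr (.inl ⟨rfl, hi, hij, hjn⟩))

theorem inverseMongeOn_dA_of_mem_Kcone (hd : d ∈ Kcone n) (m : ℕ) :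
    InverseMongeOn (dA d) (Set.Icc 1 m) (Set.Icc m n) :=
  inverseMongeOn_of_succ Set.ordConnected_Icc Set.ordConnected_Icc
    fun _ _ hi hi' _ _ hj hj' ↦
      dA_add_dA_le_of_mem_Kcone hd hi.1 (Nat.lt_of_succ_le (hi'.2.trans hj.1)) hj'.2

end Kcone

/-- Every `d ∈ K_{2n}` satisfies
`(A_{i,j,k}) : d_{i,j} + d_{j+1,k} ≥ d_{i,k}` for `1 ≤ i ≤ j < k ≤ n`, and
`(B_{i,j,k,l}) : d_{i,j} + d_{k,l} ≥ d_{i,l} + d_{k,j}` for `1 ≤ i < k ≤ j < l ≤ n`. -/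
theorem spFFLV_ineq_A_B (n : ℕ) (hn : 2 ≤ n) (d : SpRoot n → ℝ) (hd : d ∈ Kcone n) :
    (∀ i j k : ℕ, 1 ≤ i → i ≤ j → j < k → k ≤ n →
      dA d i k ≤ dA d i j + dA d (j+1) k) ∧
    (∀ i j k l : ℕ, 1 ≤ i → i < k → k ≤ j → j < l → l ≤ n →
      dA d i l + dA d k j ≤ dA d i j + dA d k l) := by
  refine ⟨fun i j k hi hij hjk hkn ↦ ?_, fun i j k l hi hik hkj hjl hln ↦ ?_⟩
  · have monge (m : ℕ) : InverseMongeOn (dA d) (Set.Icc i m) (Set.Icc m k) :=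
      (inverseMongeOn_dA_of_mem_Kcone hd m).mono (Set.Icc_subset_Icc_left hi)
        (Set.Icc_subset_Icc_right hkn)
    exact (monge j).le_add (monge (j + 1)) hij j.le_succ hjk
      (dA_add_one_le_of_mem_Kcone hd (hi.trans hij) (hjk.trans_le hkn))
  · exact inverseMongeOn_dA_of_mem_Kcone hd k ⟨hi, hik.le⟩ ⟨hi.trans hik.le, le_rfl⟩ hik.le
      ⟨hkj, hjl.le.trans hln⟩ ⟨hkj.trans hjl.le, hln⟩ hjl.le
end

section
/- Every d ∈ K_{2n} satisfies the inequalities (C_{i,j,k,l}): d_{i,l̄} + d_{k,j̄} ≥ d_{i,j̄} + d_{k,l̄} for all 1 ≤ i < k ≤ j < l ≤ n, and (D_{i,j}): 2·d_{i,j̄} ≥ d_{i,ī} + d_{j,j̄} for all 1 ≤ i < j ≤ n. -/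
section Monge

variable {α β M : Type*}

/-- The Monge inequality for the matrix `f` on all rows in `s` and columns in `t`. It is stated for
weakly ordered pairs of rows and of columns; equal rows or columns contribute only equalities. -/
def MongeOn [Preorder α] [Preorder β] [Add M] [LE M] (f : α → β → M) (s : Set α) (t : Set β) :
    Prop :=
  ∀ ⦃i⦄, i ∈ s → ∀ ⦃k⦄, k ∈ s → i ≤ k → ∀ ⦃j⦄, j ∈ t → ∀ ⦃l⦄, l ∈ t → j ≤ l →
    f i j + f k l ≤ f i l + f k j

theorem mongeOn_of_succ [PartialOrder α] [SuccOrder α] [IsSuccArchimedean α]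
    [PartialOrder β] [SuccOrder β] [IsSuccArchimedean β]
    [AddCommGroup M] [Preorder M] [AddLeftMono M]
    {f : α → β → M} {s : Set α} {t : Set β} (hs : s.OrdConnected) (ht : t.OrdConnected)
    (h : ∀ i ∈ s, Order.succ i ∈ s → ∀ j ∈ t, Order.succ j ∈ t →
      f i j + f (Order.succ i) (Order.succ j) ≤ f i (Order.succ j) + f (Order.succ i) j) :
    MongeOn f s t := by
  have column_step (j : β) (hj : j ∈ t) (hj' : Order.succ j ∈ t) :
      AntitoneOn (fun i ↦ f i (Order.succ j) - f i j) s :=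
    antitoneOn_of_succ_le hs fun i _ hi hi' ↦ by
      rw [sub_le_sub_iff, add_comm]
      exact h i hi hi' j hj hj'
  intro i hi k hk hik j hj l hl hjl
  have row_difference : MonotoneOn (fun j ↦ f i j - f k j) t :=
    monotoneOn_of_le_succ ht fun j _ hj hj' ↦ by
      rw [sub_le_sub_iff, add_comm]
      exact sub_le_sub_iff.mp (column_step j hj hj' hi hk hik)
  exact sub_le_sub_iff.mp (row_difference hj hl hjl)

variable [LinearOrder α]

/-- The symmetric matrix whose entries on and above the diagonal are those of `f`. -/
def symmetrizeUpper (f : α → α → M) (i j : α) : M :=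
  f (min i j) (max i j)

theorem symmetrizeUpper_of_le (f : α → α → M) {i j : α} (h : i ≤ j) :
    symmetrizeUpper f i j = f i j := by
  rw [symmetrizeUpper, min_eq_left h, max_eq_right h]

theorem symmetrizeUpper_comm (f : α → α → M) (i j : α) :
    symmetrizeUpper f i j = symmetrizeUpper f j i := by
  rw [symmetrizeUpper, symmetrizeUpper, min_comm, max_comm]

theorem mongeOn_symmetrizeUpper_of_succ [SuccOrder α] [IsSuccArchimedean α]
    [AddCommGroup M] [Preorder M] [AddLeftMono M]
    {f : α → α → M} {s : Set α} (hs : s.OrdConnected)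
    (hdiag : ∀ i ∈ s, Order.succ i ∈ s →
      f i i + f (Order.succ i) (Order.succ i) ≤ f i (Order.succ i) + f i (Order.succ i))
    (hupper : ∀ i ∈ s, ∀ j, i < j → Order.succ j ∈ s →
      f i j + f (Order.succ i) (Order.succ j) ≤ f i (Order.succ j) + f (Order.succ i) j) :
    MongeOn (symmetrizeUpper f) s s := by
  refine mongeOn_of_succ hs hs fun i hi hi' j hj hj' ↦ ?_
  wlog hij : i ≤ j generalizing i j
  · have transposed := this j hj hj' i hi hi' (le_of_not_ge hij)
    rw [add_comm (symmetrizeUpper f j (Order.succ i))] at transposed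
    simpa only [symmetrizeUpper_comm f j, symmetrizeUpper_comm f (Order.succ j)] using transposed
  have hij' : i ≤ Order.succ j := hij.trans (Order.le_succ j)
  rw [symmetrizeUpper_of_le f hij, symmetrizeUpper_of_le f (Order.succ_le_succ hij),
    symmetrizeUpper_of_le f hij']
  obtain rfl | hlt := hij.eq_or_lt
  · rw [symmetrizeUpper_comm, symmetrizeUpper_of_le f hij']
    exact hdiag i hi hi'
  · rw [symmetrizeUpper_of_le f (Order.succ_le_of_lt hlt)]
    exact hupper i hi j hlt hj'

end Monge

section Kcone

variable {n : ℕ} {d : SpRoot n → ℝ}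

theorem dB_add_dB_succ_le_of_mem_Kcone (hd : d ∈ Kcone n) {i j : ℕ}
    (hi : 1 ≤ i) (hij : i < j) (hj : j + 1 ≤ n) :
    dB d i j + dB d (i + 1) (j + 1) ≤ dB d i (j + 1) + dB d (i + 1) j :=
  hd (FacetKind.C, i, j) (Or.inr (Or.inr (Or.inl ⟨rfl, hi, hij, hj⟩)))

theorem dB_self_add_dB_succ_self_le_of_mem_Kcone (hd : d ∈ Kcone n) {i : ℕ}
    (hi : 1 ≤ i) (hi' : i + 1 ≤ n) :
    dB d i i + dB d (i + 1) (i + 1) ≤ 2 * dB d i (i + 1) :=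
  hd (FacetKind.D, i, i + 1) (Or.inr (Or.inr (Or.inr ⟨rfl, hi, hi', rfl⟩)))

theorem mongeOn_symmetrizeUpper_dB_of_mem_Kcone (hd : d ∈ Kcone n) :
    MongeOn (symmetrizeUpper (dB d)) (Set.Icc 1 n) (Set.Icc 1 n) := by
  refine mongeOn_symmetrizeUpper_of_succ Set.ordConnected_Icc
    (fun i hi hi' ↦ ?_) (fun i hi j hij hj' ↦ ?_)
  · rw [← two_mul]
    exact dB_self_add_dB_succ_self_le_of_mem_Kcone hd hi.1 hi'.2
  · exact dB_add_dB_succ_le_of_mem_Kcone hd hi.1 hij hj'.2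

end Kcone

/-- Every `d ∈ K_{2n}` satisfies
`(C_{i,j,k,l}) : d_{i,l̄} + d_{k,j̄} ≥ d_{i,j̄} + d_{k,l̄}` for `1 ≤ i < k ≤ j < l ≤ n`, and
`(D_{i,j}) : 2·d_{i,j̄} ≥ d_{i,ī} + d_{j,j̄}` for `1 ≤ i < j ≤ n`. -/
theorem spFFLV_ineq_C_D (n : ℕ) (hn : 2 ≤ n) (d : SpRoot n → ℝ) (hd : d ∈ Kcone n) :
    (∀ i j k l : ℕ, 1 ≤ i → i < k → k ≤ j → j < l → l ≤ n →
      dB d i j + dB d k l ≤ dB d i l + dB d k j) ∧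
    (∀ i j : ℕ, 1 ≤ i → i < j → j ≤ n →
      dB d i i + dB d j j ≤ 2 * dB d i j) := by
  have monge := mongeOn_symmetrizeUpper_dB_of_mem_Kcone hd
  constructor
  · intro i j k l hi hik hkj hjl hl
    have hij : i ≤ j := hik.le.trans hkj
    have hjn : j ≤ n := hjl.le.trans hl
    have hk : k ∈ Set.Icc 1 n := ⟨hi.trans hik.le, hkj.trans hjn⟩
    have minor := monge ⟨hi, hij.trans hjn⟩ hk hik.le ⟨hi.trans hij, hjn⟩
      ⟨hi.trans (hij.trans hjl.le), hl⟩ hjl.le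
    rwa [symmetrizeUpper_of_le _ hij, symmetrizeUpper_of_le _ (hkj.trans hjl.le),
      symmetrizeUpper_of_le _ (hij.trans hjl.le), symmetrizeUpper_of_le _ hkj] at minor
  · intro i j hi hij hj
    have hi_mem : i ∈ Set.Icc 1 n := ⟨hi, hij.le.trans hj⟩
    have hj_mem : j ∈ Set.Icc 1 n := ⟨hi.trans hij.le, hj⟩
    have minor := monge hi_mem hj_mem hij.le hi_mem hj_mem hij.le
    rwa [symmetrizeUpper_comm _ j i, symmetrizeUpper_of_le _ le_rfl,
      symmetrizeUpper_of_le _ le_rfl, symmetrizeUpper_of_le _ hij.le, ← two_mul] at minor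
end

section
/- Let d ∈ ℝ^{Φ⁺} satisfy every defining inequality of K_{2n} strictly, and let e_1,…,e_{2n} be the standard basis of ℂ^{2n}. Fix integers 1 ≤ x < y ≤ 2n. Then for every m ≥ 1 and every sequence of positive roots β_1,…,β_m ∈ Φ⁺ such that the matrix product f_{β_1}·f_{β_2}⋯f_{β_m} applied to the vector e_x equals e_y or −e_y, one has d(β_1) + … + d(β_m) ≥ d(r(x,y)), with equality if and only if m = 1 and β_1 = r(x,y). (That is, the degree function has a unique minimum on the set of monomials in the root vectors sending e_x to ±e_y, attained at the single root vector f_{r(x,y)}.) -/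
/-- The elementary `2n × 2n` matrix with a `1` in row `p`, column `q` (rows and columns
numbered `1, …, 2n`) and `0` elsewhere. -/
noncomputable def Emat (n p q : ℕ) : Matrix (Fin (2*n)) (Fin (2*n)) ℂ :=
  Matrix.of fun a b => if a.val + 1 = p ∧ b.val + 1 = q then 1 else 0

/-- The root vectors `f_β` of `sp_{2n}` as `2n × 2n` matrices:
`f_{i,ī} = E_{ī,i}`, `f_{i,j} = E_{j+1,i} - E_{ī,(j+1)̄}` for `j < n`,
`f_{i,j̄} = E_{j̄,i} + E_{ī,j}` for `i < j`, with `ī := 2n+1-i`, and the root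
`α_{i,n} = α_{i,n̄}` (for `i < n`) carrying the vector `f_{i,n̄}`. -/
noncomputable def fvec (n : ℕ) : ℕ × ℕ × Bool → Matrix (Fin (2*n)) (Fin (2*n)) ℂ
  | (i, j, false) =>
      if j < n then Emat n (j+1) i - Emat n (2*n+1-i) (2*n+1-(j+1))
      else if i < n then Emat n (n+1) i + Emat n (2*n+1-i) n
      else Emat n (n+1) n
  | (i, j, true) =>
      if i = j then Emat n (2*n+1-i) i
      else Emat n (2*n+1-j) i + Emat n (2*n+1-i) j

/-- The standard basis vector `e_x` of `ℂ^{2n}` (coordinates numbered `1, …, 2n`). -/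
noncomputable def evec (n x : ℕ) : Fin (2*n) → ℂ :=
  fun a => if a.val + 1 = x then 1 else 0

/-- The positive root `r(x,y)` attached to `1 ≤ x < y ≤ 2n` (identifying
`1 < ⋯ < n < n̄ < ⋯ < 1̄` with `{1, …, 2n}` via `ī = 2n+1-i`):
`r(x,y) = α_{x,y-1}` if `y ≤ n`; `r(x,y) = α_{x,(2n+1-y)̄}` if `x ≤ n < y ≤ 2n+1-x`;
`r(x,y) = α_{2n+1-y,x̄}` if `x ≤ n` and `y > 2n+1-x`; `r(x,y) = α_{2n+1-y,2n-x}` if `n < x`. -/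
def rIdxXY (n x y : ℕ) : ℕ × ℕ × Bool :=
  if y ≤ n then (x, y - 1, false)
  else if x ≤ n then
    if y ≤ 2*n + 1 - x then rIdx n x (2*n + 1 - y) true
    else rIdx n (2*n + 1 - y) x true
  else (2*n + 1 - y, 2*n - x, false)

/-!
Put `G x y = d(r(x,y))` for `x < y` and `G x x = 0`. The four families of defining inequalities of
`K_{2n}` are exactly the Monge inequalities `G x (y+1) + G (x+1) y < G x y + G (x+1) (y+1)` for
`1 ≤ x < y < 2n`, once each unit cell is identified with its mirror image under the symmetry
`(x, y) ↦ (ȳ, x̄)` of `r`. Summing over the cells of the rectangle `[x, y] × [y, z]` gives the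
strict triangle inequality `G x z < G x y + G y z`. On the other hand the root vector `f_β` sends
`e_x` to `±e_y` if `β = r(x,y)` and to `0` if there is no such `y`, so a monomial sending `e_x` to
`±e_y` spells out an increasing path from `x` to `y`.
-/

section Monge

variable {α β M : Type*}

/-- The strict (inverse) Monge inequality for `G` on the unit cell with lower corner `(x, y)` and
upper corner `(x + 1, y + 1)`. -/
def StrictMongeAt [Add α] [One α] [Add β] [One β] [Add M] [LT M] (G : α → β → M)
    (x : α) (y : β) : Prop :=
  G x (y + 1) + G (x + 1) y < G x y + G (x + 1) (y + 1)

variable [PartialOrder α] [Add α] [One α] [SuccAddOrder α] [IsSuccArchimedean α]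
  [PartialOrder β] [Add β] [One β] [SuccAddOrder β] [IsSuccArchimedean β]
  [AddCommGroup M] [PartialOrder M] [IsOrderedAddMonoid M]

theorem add_lt_add_of_forall_strictMongeAt {G : α → β → M} {x x' : α} {y y' : β}
    (hx : x < x') (hy : y < y')
    (hG : ∀ i ∈ Set.Ico x x', ∀ j ∈ Set.Ico y y', StrictMongeAt G i j) :
    G x y' + G x' y < G x y + G x' y' := by
  have row : ∀ i ∈ Set.Ico x x', G i y' - G i y < G (i + 1) y' - G (i + 1) y := by
    intro i hi
    have mono : StrictMonoOn (fun j ↦ G (i + 1) j - G i j) (Set.Icc y y') := by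
      refine strictMonoOn_of_lt_add_one Set.ordConnected_Icc fun j hj hjy hjy' ↦ ?_
      have cell := hG i hi j ⟨hjy.1, (Order.add_one_le_iff_of_not_isMax hj).1 hjy'.2⟩
      rwa [sub_lt_sub_iff, add_comm, add_comm (G (i + 1) (j + 1))]
    have ends := mono (Set.left_mem_Icc.2 hy.le) (Set.right_mem_Icc.2 hy.le) hy
    rwa [sub_lt_sub_iff, add_comm, ← sub_lt_sub_iff] at ends
  have mono : StrictMonoOn (fun i ↦ G i y' - G i y) (Set.Icc x x') :=
    strictMonoOn_of_lt_add_one Set.ordConnected_Icc fun i hi hix hix' ↦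
      row i ⟨hix.1, (Order.add_one_le_iff_of_not_isMax hi).1 hix'.2⟩
  have ends := mono (Set.left_mem_Icc.2 hx.le) (Set.right_mem_Icc.2 hx.le) hx
  rwa [sub_lt_sub_iff, add_comm (G x' y')] at ends

end Monge

section Degree

variable {n : ℕ}

/-- The degree `d(r(x,y))` as a function of the pair `x < y`. On the diagonal the index `r(x,x)` is
not a root, so that `dval` makes the degree vanish there, as the Monge inequalities require. -/
noncomputable def pairDeg (d : SpRoot n → ℝ) (x y : ℕ) : ℝ :=
  dval d (rIdxXY n x y)

theorem dval_val (d : SpRoot n → ℝ) (β : SpRoot n) : dval d β.val = d β :=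
  dif_pos β.property

theorem pairDeg_eq_of_val_eq (d : SpRoot n → ℝ) {β : SpRoot n} {x y : ℕ}
    (label : β.val = rIdxXY n x y) : pairDeg d x y = d β := by
  rw [pairDeg, ← label, dval_val]

theorem pairDeg_self (d : SpRoot n → ℝ) (x : ℕ) : pairDeg d x x = 0 := by
  refine dif_neg fun h ↦ ?_
  simp only [rIdxXY, rIdx, IsSpRootIdx] at h
  split_ifs at h <;> simp only at h <;> omega

theorem rIdxXY_add_one {i j : ℕ} (hij : i ≤ j) (hj : j ≤ n) :
    rIdxXY n i (j + 1) = (i, j, false) := by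
  simp only [rIdxXY, rIdx, true_and]
  split_ifs <;> simp only [Prod.mk.injEq, and_true, true_and] <;> omega

theorem rIdxXY_of_add_eq {i j y : ℕ} (hij : i ≤ j) (hj : j ≤ n) (hy : y + j = 2 * n + 1) :
    rIdxXY n i y = rIdx n i j true := by
  obtain rfl : j = 2 * n + 1 - y := by omega
  rw [rIdxXY, if_neg (by omega), if_pos (by omega), if_pos (by omega)]

theorem rIdxXY_mirror {x y : ℕ} (hxy : x ≤ y) :
    rIdxXY n (2 * n + 1 - y) (2 * n + 1 - x) = rIdxXY n x y := by
  generalize hu : 2 * n + 1 - y = u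
  generalize hv : 2 * n + 1 - x = v
  simp only [rIdxXY, rIdx, true_and]
  split_ifs <;> simp only [Prod.mk.injEq, and_true, reduceCtorEq, and_false] <;> omega

theorem pairDeg_mirror (d : SpRoot n → ℝ) {x y : ℕ} (hxy : x ≤ y) :
    pairDeg d (2 * n + 1 - y) (2 * n + 1 - x) = pairDeg d x y := by
  rw [pairDeg, rIdxXY_mirror hxy, pairDeg]

theorem pairDeg_add_one (d : SpRoot n → ℝ) {i j : ℕ} (hij : i ≤ j) (hj : j ≤ n) :
    pairDeg d i (j + 1) = dA d i j := by
  rw [pairDeg, rIdxXY_add_one hij hj, dA]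

theorem pairDeg_of_add_eq (d : SpRoot n → ℝ) {i j y : ℕ} (hij : i ≤ j) (hj : j ≤ n)
    (hy : y + j = 2 * n + 1) : pairDeg d i y = dB d i j := by
  rw [pairDeg, rIdxXY_of_add_eq hij hj hy, dB]

variable {d : SpRoot n → ℝ}

theorem strictMongeAt_pairDeg_A (hd : d ∈ KconeStrict n) {i : ℕ} (hi : 1 ≤ i) (hin : i + 1 ≤ n) :
    StrictMongeAt (pairDeg d) i (i + 1) := by
  have facet : dA d i (i + 1) < dA d i i + dA d (i + 1) (i + 1) :=
    hd (.A, i, i + 1) (.inl ⟨rfl, hi, hin, rfl⟩)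
  rw [StrictMongeAt, pairDeg_self, pairDeg_add_one d (by omega) hin,
    pairDeg_add_one d le_rfl (by omega), pairDeg_add_one d le_rfl hin, add_zero]
  exact facet

theorem strictMongeAt_pairDeg_B (hd : d ∈ KconeStrict n) {i j : ℕ} (hi : 1 ≤ i) (hij : i < j)
    (hjn : j + 1 ≤ n) : StrictMongeAt (pairDeg d) i (j + 1) := by
  have facet : dA d i (j + 1) + dA d (i + 1) j < dA d i j + dA d (i + 1) (j + 1) :=
    hd (.B, i, j) (.inr (.inl ⟨rfl, hi, hij, hjn⟩))
  rw [StrictMongeAt, pairDeg_add_one d (by omega) hjn,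
    pairDeg_add_one d (i := i + 1) hij (by omega), pairDeg_add_one d hij.le (by omega),
    pairDeg_add_one d (by omega) hjn]
  exact facet

theorem strictMongeAt_pairDeg_C (hd : d ∈ KconeStrict n) {i j y : ℕ} (hi : 1 ≤ i) (hij : i < j)
    (hjn : j + 1 ≤ n) (hy : y + j = 2 * n) : StrictMongeAt (pairDeg d) i y := by
  have facet : dB d i j + dB d (i + 1) (j + 1) < dB d i (j + 1) + dB d (i + 1) j :=
    hd (.C, i, j) (.inr (.inr (.inl ⟨rfl, hi, hij, hjn⟩)))
  rw [StrictMongeAt, pairDeg_of_add_eq d (j := j) hij.le (by omega) (by omega),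
    pairDeg_of_add_eq d (j := j + 1) (by omega) hjn (by omega),
    pairDeg_of_add_eq d (j := j + 1) (by omega) hjn (by omega),
    pairDeg_of_add_eq d (i := i + 1) (j := j) hij (by omega) (by omega)]
  exact facet

theorem strictMongeAt_pairDeg_D (hd : d ∈ KconeStrict n) {i y : ℕ} (hi : 1 ≤ i) (hin : i + 1 ≤ n)
    (hy : y + i = 2 * n) : StrictMongeAt (pairDeg d) i y := by
  have facet : dB d i i + dB d (i + 1) (i + 1) < 2 * dB d i (i + 1) :=
    hd (.D, i, i + 1) (.inr (.inr (.inr ⟨rfl, hi, hin, rfl⟩)))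
  have mirror : pairDeg d (i + 1) (y + 1) = pairDeg d i y := by
    rw [← pairDeg_mirror d (by omega)]
    congr 1 <;> omega
  rw [StrictMongeAt, mirror, ← two_mul, pairDeg_of_add_eq d (j := i) le_rfl (by omega) (by omega),
    pairDeg_of_add_eq d (j := i + 1) le_rfl hin (by omega),
    pairDeg_of_add_eq d (j := i + 1) (by omega) hin (by omega)]
  exact facet

theorem strictMongeAt_pairDeg_of_add_le (hd : d ∈ KconeStrict n) {x y : ℕ} (hx : 1 ≤ x)
    (hxy : x < y) (hsum : x + y ≤ 2 * n) : StrictMongeAt (pairDeg d) x y := by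
  rcases le_or_gt y n with hyn | hyn
  · obtain ⟨j, rfl⟩ : ∃ j, y = j + 1 := ⟨y - 1, by omega⟩
    rcases (Nat.lt_add_one_iff.1 hxy).eq_or_lt with rfl | hxj
    · exact strictMongeAt_pairDeg_A hd hx hyn
    · exact strictMongeAt_pairDeg_B hd hx hxj hyn
  · rcases hsum.eq_or_lt with hsum | hsum
    · exact strictMongeAt_pairDeg_D hd hx (by omega) (by omega)
    · exact strictMongeAt_pairDeg_C (j := 2 * n - y) hd hx (by omega) (by omega) (by omega)

theorem strictMongeAt_pairDeg_of_mirror {x y : ℕ} (hxy : x < y) (hy : y ≤ 2 * n)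
    (h : StrictMongeAt (pairDeg d) (2 * n - y) (2 * n - x)) : StrictMongeAt (pairDeg d) x y := by
  rw [StrictMongeAt, show 2 * n - y + 1 = 2 * n + 1 - y by omega,
    show 2 * n - x + 1 = 2 * n + 1 - x by omega,
    show 2 * n - y = 2 * n + 1 - (y + 1) by omega,
    show 2 * n - x = 2 * n + 1 - (x + 1) by omega,
    pairDeg_mirror d (x := x) (by omega), pairDeg_mirror d hxy,
    pairDeg_mirror d (Nat.succ_le_succ hxy.le), pairDeg_mirror d hxy.le] at h
  rwa [StrictMongeAt, add_comm (pairDeg d x y)]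

theorem strictMongeAt_pairDeg (hd : d ∈ KconeStrict n) {x y : ℕ} (hx : 1 ≤ x) (hxy : x < y)
    (hy : y < 2 * n) : StrictMongeAt (pairDeg d) x y := by
  rcases le_total (x + y) (2 * n) with hsum | hsum
  · exact strictMongeAt_pairDeg_of_add_le hd hx hxy hsum
  · exact strictMongeAt_pairDeg_of_mirror hxy hy.le
      (strictMongeAt_pairDeg_of_add_le hd (by omega) (by omega) (by omega))

theorem pairDeg_lt_add (hd : d ∈ KconeStrict n) {x y z : ℕ} (hx : 1 ≤ x) (hxy : x < y)
    (hyz : y < z) (hz : z ≤ 2 * n) : pairDeg d x z < pairDeg d x y + pairDeg d y z := by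
  have rectangle := add_lt_add_of_forall_strictMongeAt (G := pairDeg d) hxy hyz fun i hi j hj ↦
    strictMongeAt_pairDeg hd (hx.trans hi.1) (hi.2.trans_le hj.1) (hj.2.trans_le hz)
  rwa [pairDeg_self, add_zero] at rectangle

theorem pairDeg_le_add (hd : d ∈ KconeStrict n) {x y z : ℕ} (hx : 1 ≤ x) (hxy : x ≤ y)
    (hyz : y < z) (hz : z ≤ 2 * n) : pairDeg d x z ≤ pairDeg d x y + pairDeg d y z := by
  rcases hxy.eq_or_lt with rfl | hxy
  · rw [pairDeg_self, zero_add]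
  · exact (pairDeg_lt_add hd hx hxy hyz hz).le

end Degree

section Path

variable {n : ℕ}

/-- `RootPath n x L y` says that the list `L` of positive roots, read from right to left (the order
in which a product of matrices acts on a vector), labels the steps `u < v` of an increasing path
from `x` to `y` in `{1, …, 2n}`, where a step from `u` to `v` has label `r(u,v)`. -/
inductive RootPath (n x : ℕ) : List (SpRoot n) → ℕ → Prop
  | nil : RootPath n x [] x
  | cons {L : List (SpRoot n)} {β : SpRoot n} {u v : ℕ} (path : RootPath n x L u) (lt : u < v)
      (le : v ≤ 2 * n) (label : β.val = rIdxXY n u v) : RootPath n x (β :: L) v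

namespace RootPath

variable {d : SpRoot n → ℝ} {L : List (SpRoot n)} {β : SpRoot n} {x y : ℕ}

theorem source_le_target (path : RootPath n x L y) : x ≤ y := by
  induction path with
  | nil => exact le_rfl
  | cons _ lt _ _ ih => exact ih.trans lt.le

theorem source_lt_target (path : RootPath n x L y) (hL : L ≠ []) : x < y := by
  cases path with
  | nil => exact absurd rfl hL
  | cons path lt _ _ => exact path.source_le_target.trans_lt lt

theorem label_eq (path : RootPath n x [β] y) : β.val = rIdxXY n x y := by
  obtain _ | ⟨⟨⟩, _, _, label⟩ := path
  exact label

theorem pairDeg_le_sum (hd : d ∈ KconeStrict n) (hx : 1 ≤ x) (path : RootPath n x L y) :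
    pairDeg d x y ≤ (L.map d).sum := by
  induction path with
  | nil => simp [pairDeg_self]
  | @cons L β u v path lt le label ih =>
    calc pairDeg d x v
      _ ≤ pairDeg d x u + pairDeg d u v := pairDeg_le_add hd hx path.source_le_target lt le
      _ ≤ (L.map d).sum + d β := add_le_add ih (pairDeg_eq_of_val_eq d label).le
      _ = ((β :: L).map d).sum := by rw [List.map_cons, List.sum_cons, add_comm]

theorem pairDeg_lt_sum (hd : d ∈ KconeStrict n) (hx : 1 ≤ x) (path : RootPath n x (β :: L) y)
    (hL : L ≠ []) : pairDeg d x y < ((β :: L).map d).sum := by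
  obtain _ | @⟨_, _, u, _, path, lt, le, label⟩ := path
  calc pairDeg d x y
    _ < pairDeg d x u + pairDeg d u y := pairDeg_lt_add hd hx (path.source_lt_target hL) lt le
    _ ≤ (L.map d).sum + d β :=
      add_le_add (path.pairDeg_le_sum hd hx) (pairDeg_eq_of_val_eq d label).le
    _ = ((β :: L).map d).sum := by rw [List.map_cons, List.sum_cons, add_comm]

theorem sum_eq_pairDeg_iff (hd : d ∈ KconeStrict n) (hx : 1 ≤ x) (path : RootPath n x L y)
    (hL : L ≠ []) :
    (L.map d).sum = pairDeg d x y ↔ L.length = 1 ∧ ∀ β ∈ L, β.val = rIdxXY n x y := by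
  match L with
  | [] => exact absurd rfl hL
  | [β] => simp [path.label_eq, pairDeg_eq_of_val_eq d path.label_eq]
  | β :: γ :: L =>
    have sum_ne := (path.pairDeg_lt_sum hd hx (List.cons_ne_nil γ L)).ne'
    simp only [sum_ne, List.length_cons, Nat.add_eq_right, Nat.add_one_ne_zero, false_and]

end RootPath

end Path

section Action

open Matrix

variable {n : ℕ}

theorem evec_dotProduct_evec {x : ℕ} (hx : 1 ≤ x) (hx' : x ≤ 2 * n) (q : ℕ) :
    evec n q ⬝ᵥ evec n x = if q = x then 1 else 0 := by
  have single : evec n x = Pi.single ⟨x - 1, by omega⟩ 1 := by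
    ext a
    simp only [evec, Pi.single_apply, Fin.ext_iff]
    congr 1
    simp only [eq_iff_iff]
    omega
  rw [single, dotProduct_single_one, evec]
  simp only [Nat.sub_add_cancel hx, eq_comm]

theorem Emat_eq_vecMulVec (p q : ℕ) : Emat n p q = vecMulVec (evec n p) (evec n q) := by
  ext a b
  simp only [Emat, evec, of_apply, vecMulVec_apply, ite_zero_mul_ite_zero, mul_one]

theorem Emat_mulVec_evec {x : ℕ} (hx : 1 ≤ x) (hx' : x ≤ 2 * n) (p q : ℕ) :
    Emat n p q *ᵥ evec n x = if q = x then evec n p else 0 := by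
  rw [Emat_eq_vecMulVec, vecMulVec_mulVec, evec_dotProduct_evec hx hx']
  split_ifs <;> simp

theorem exists_fvec_eq {t : ℕ × ℕ × Bool} (ht : IsSpRootIdx n t) :
    ∃ x y, 1 ≤ x ∧ x < y ∧ t = rIdxXY n x y ∧
      (x + y = 2 * n + 1 ∧ fvec n t = Emat n y x ∨
        x + y < 2 * n + 1 ∧ ∃ ε : ℤˣ,
          fvec n t = Emat n y x + ε • Emat n (2 * n + 1 - x) (2 * n + 1 - y)) := by
  obtain ⟨i, j, _ | _⟩ := t <;> obtain ⟨hi, hij, hjn, hbar⟩ := ht <;>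
    simp only [forall_const, reduceCtorEq, false_implies] at hi hij hjn hbar
  · refine ⟨i, j + 1, hi, by omega, (rIdxXY_add_one hij hjn).symm, ?_⟩
    simp only [fvec]
    split_ifs with hj hin
    · exact .inr ⟨by omega, -1, by rw [Units.neg_smul, one_smul, sub_eq_add_neg]⟩
    · obtain rfl : j = n := by omega
      exact .inr ⟨by omega, 1, by rw [one_smul, show 2 * j + 1 - (j + 1) = j by omega]⟩
    · obtain ⟨rfl, rfl⟩ : i = n ∧ j = n := by omega
      exact .inl ⟨by omega, rfl⟩
  · refine ⟨i, 2 * n + 1 - j, hi, by omega, ?_, ?_⟩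
    · rw [rIdxXY_of_add_eq hij hjn (by omega), rIdx, if_neg (by omega)]
    · simp only [fvec]
      split_ifs with h
      · subst h
        exact .inl ⟨by omega, rfl⟩
      · exact .inr ⟨by omega, 1, by
          rw [one_smul, show 2 * n + 1 - (2 * n + 1 - j) = j by omega]⟩

theorem fvec_mulVec_evec {t : ℕ × ℕ × Bool} (ht : IsSpRootIdx n t) {u : ℕ} (hu : 1 ≤ u)
    (hu' : u ≤ 2 * n) :
    fvec n t *ᵥ evec n u = 0 ∨ ∃ v, u < v ∧ v ≤ 2 * n ∧ t = rIdxXY n u v ∧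
      ∃ ε : ℤˣ, fvec n t *ᵥ evec n u = ε • evec n v := by
  obtain ⟨x, y, hx, hxy, rfl, ⟨hsum, hf⟩ | ⟨hsum, ε, hf⟩⟩ := exists_fvec_eq ht
  · rw [hf, Emat_mulVec_evec hu hu']
    split_ifs with hxu
    · subst hxu
      exact .inr ⟨y, hxy, by omega, rfl, 1, (one_smul _ _).symm⟩
    · exact .inl rfl
  · rw [hf, add_mulVec, smul_mulVec, Emat_mulVec_evec hu hu', Emat_mulVec_evec hu hu']
    split_ifs with hxu hyu hyu
    · omega
    · subst hxu
      exact .inr ⟨y, hxy, by omega, rfl, 1, by simp⟩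
    · subst hyu
      exact .inr ⟨2 * n + 1 - x, by omega, by omega,
        (rIdxXY_mirror hxy.le).symm, ε, zero_add _⟩
    · exact .inl (by simp)

theorem rootPath_or_prod_mulVec_eq_zero {x : ℕ} (hx : 1 ≤ x) (hx' : x ≤ 2 * n)
    (L : List (SpRoot n)) :
    (L.map fun β ↦ fvec n β.val).prod *ᵥ evec n x = 0 ∨
      ∃ y ≤ 2 * n, RootPath n x L y ∧
        ∃ ε : ℤˣ, (L.map fun β ↦ fvec n β.val).prod *ᵥ evec n x = ε • evec n y := by
  induction L with
  | nil => exact .inr ⟨x, hx', .nil, 1, by simp⟩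
  | cons β L ih =>
    simp only [List.map_cons, List.prod_cons, ← mulVec_mulVec]
    obtain hL | ⟨u, hu, path, δ, hL⟩ := ih
    · exact .inl (by rw [hL, mulVec_zero])
    rw [hL, mulVec_smul]
    obtain hβ | ⟨v, huv, hv, label, ε, hβ⟩ :=
      fvec_mulVec_evec β.property (hx.trans path.source_le_target) hu
    · exact .inl (by rw [hβ, smul_zero])
    · exact .inr ⟨v, hv, path.cons huv hv label, δ * ε, by rw [hβ, smul_smul]⟩

theorem eq_of_smul_evec_eq_smul_evec {y z : ℕ} (hy : 1 ≤ y) (hy' : y ≤ 2 * n) {ε δ : ℤˣ}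
    (h : ε • evec n z = δ • evec n y) : z = y := by
  by_contra hzy
  have coord := congrFun h.symm ⟨y - 1, by omega⟩
  simp [evec, Nat.sub_add_cancel hy, Ne.symm hzy, Units.smul_def] at coord

theorem evec_ne_zero {y : ℕ} (hy : 1 ≤ y) (hy' : y ≤ 2 * n) : evec n y ≠ 0 := by
  intro h
  have coord := congrFun h ⟨y - 1, by omega⟩
  simp [evec, Nat.sub_add_cancel hy] at coord

theorem rootPath_of_prod_mulVec_eq {x y : ℕ} (hx : 1 ≤ x) (hx' : x ≤ 2 * n) (hy : 1 ≤ y)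
    (hy' : y ≤ 2 * n) {L : List (SpRoot n)} {δ : ℤˣ}
    (hL : (L.map fun β ↦ fvec n β.val).prod *ᵥ evec n x = δ • evec n y) : RootPath n x L y := by
  obtain h | ⟨z, -, path, ε, h⟩ := rootPath_or_prod_mulVec_eq_zero hx hx' L
  · exact absurd (hL.symm.trans h) ((smul_ne_zero_iff_ne δ).2 (evec_ne_zero hy hy'))
  · exact eq_of_smul_evec_eq_smul_evec hy hy' (h.symm.trans hL) ▸ path

end Action

/-- Let `d` satisfy every defining inequality of `K_{2n}` strictly and let
`1 ≤ x < y ≤ 2n`. For every `m ≥ 1` and every sequence `β₁, …, β_m` of positive roots such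
that `f_{β₁}⋯f_{β_m}·e_x = ±e_y`, one has `d(β₁) + ⋯ + d(β_m) ≥ d(r(x,y))`, with equality if
and only if `m = 1` and `β₁ = r(x,y)`. -/
theorem spFFLV_unique_min_on_M (n : ℕ) (hn : 2 ≤ n)
    (d : SpRoot n → ℝ) (hd : d ∈ KconeStrict n)
    (x y : ℕ) (hx : 1 ≤ x) (hxy : x < y) (hy : y ≤ 2*n)
    (m : ℕ) (hm : 1 ≤ m) (β : Fin m → SpRoot n)
    (hact : (List.ofFn fun r => fvec n (β r).val).prod.mulVec (evec n x) = evec n y ∨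
            (List.ofFn fun r => fvec n (β r).val).prod.mulVec (evec n x) = -(evec n y)) :
    dval d (rIdxXY n x y) ≤ ∑ r, d (β r) ∧
    ((∑ r, d (β r)) = dval d (rIdxXY n x y) ↔
      (m = 1 ∧ ∀ r, (β r).val = rIdxXY n x y)) := by
  obtain ⟨δ, action⟩ : ∃ δ : ℤˣ,
      ((List.ofFn β).map fun b ↦ fvec n b.val).prod.mulVec (evec n x) = δ • evec n y := by
    rw [List.map_ofFn]
    exact hact.elim (fun h ↦ ⟨1, h.trans (one_smul _ _).symm⟩)
      fun h ↦ ⟨-1, h.trans (by rw [Units.neg_smul, one_smul])⟩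
  have path : RootPath n x (List.ofFn β) y :=
    rootPath_of_prod_mulVec_eq hx (by omega) (by omega) hy action
  have sum_eq : ((List.ofFn β).map d).sum = ∑ r, d (β r) := by
    rw [List.map_ofFn, List.sum_ofFn]
    rfl
  have nonempty : List.ofFn β ≠ [] := mt List.ofFn_eq_nil_iff.1 (by omega)
  rw [← sum_eq]
  refine ⟨path.pairDeg_le_sum hd hx, (path.sum_eq_pairDeg_iff hd hx nonempty).trans ?_⟩
  rw [List.length_ofFn, List.forall_mem_ofFn_iff]
end
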